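/- Let P be a plurisubharmonic, non-pluriharmonic real polynomial on C², homogeneous of degree 2k, with no pluriharmonic terms, and assume the Levi-degeneracy set w(P) possesses Property (B). Then (1) there exist a subharmonic homogeneous real polynomial U on C and a holomorphic homogeneous polynomial F on C² such that P(z₁,z₂) = U(F(z₁,z₂)); and (2) writing F⁻¹{0} = L₁ ∪ … ∪ L_N as a union of complex lines through 0, there exists a C^∞-smooth function H ≥ 0 on C² such that (a) H⁻¹{0} = ∪_{j=1}^{N} L_j and (b) P − δH is plurisubharmonic on C² for every δ with 0 < δ ≤ 1. -/

import Mathlib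

/-!
# Homogeneous bumping under Property (B)

The tangents of the level curves of the function in Property (B) form a nonzero holomorphic vector
field `X` on `ℂ²` along which the Levi form of `P` vanishes. As the Levi form is nonnegative, `X z`
lies in its kernel, and polarisation turns this into a holomorphic equation for `T`, where
`P z = T (z, z̄)`, in which `z̄` is replaced by an independent variable `w`. By homogeneity, each
component `T_b (·, w)` of `T` of bidegree `(D - b, b)` is a homogeneous first integral of `X`. Two
homogeneous first integrals of a field on `ℂ²` are functionally dependent, so all of them are
scalar multiples of powers of one, `F`, of least degree `d`. By the Hermitian symmetry of `T`, `P`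
is then a polynomial in `F` and `F̄`, that is `P = U ∘ F`, and Euler's identity `dF_z z = d F(z)`
transfers plurisubharmonicity of `P` to subharmonicity of `U`.

It remains to bump `U` on `ℂ`. The zeros of `ΔU` on the unit circle are finite in number. If `s`
runs through their squares, then `g = |w|^(2m) ∏ (|w|² - Re (w² s̄))` is nonnegative and vanishes
at these zeros with positive Laplacian, so for a suitable power `q` of `|w|²` and small `ε > 0` the
positive form `(εq - g)² + (εq)²` has negative Laplacian there. By compactness and homogeneity its
Laplacian is at most a multiple of `|w|^N ΔU`, and composing the form with `t ↦ t / (1 + t)` removes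
the factor `|w|^N`.
-/

open Complex ComplexConjugate Metric Set

noncomputable section

/-- Wirtinger derivative `∂f` in the complex direction `e`. -/
def wd (f : ℂ × ℂ → ℂ) (e : ℂ × ℂ) (z : ℂ × ℂ) : ℂ :=
  (1 / 2) * (fderiv ℝ f z e - Complex.I * fderiv ℝ f z (Complex.I • e))

/-- Conjugate Wirtinger derivative `∂̄f` in the complex direction `e`. -/
def wdbar (f : ℂ × ℂ → ℂ) (e : ℂ × ℂ) (z : ℂ × ℂ) : ℂ :=
  (1 / 2) * (fderiv ℝ f z e + Complex.I * fderiv ℝ f z (Complex.I • e))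

/-- Mixed second derivative `∂²P/∂z_(ej)∂z̄_(ek)` of a real-valued function. -/
def mixedDeriv (P : ℂ × ℂ → ℝ) (ej ek : ℂ × ℂ) (z : ℂ × ℂ) : ℂ :=
  wd (wdbar (fun w => (P w : ℂ)) ek) ej z

/-- The Levi form of `P` at `z` in the direction `v`. -/
def leviForm (P : ℂ × ℂ → ℝ) (z v : ℂ × ℂ) : ℂ :=
  mixedDeriv P (1, 0) (1, 0) z * v.1 * conj v.1 +
  mixedDeriv P (1, 0) (0, 1) z * v.1 * conj v.2 +
  mixedDeriv P (0, 1) (1, 0) z * v.2 * conj v.1 +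
  mixedDeriv P (0, 1) (0, 1) z * v.2 * conj v.2

/-- `P` is plurisubharmonic on all of `ℂ²`. -/
def IsPsh (P : ℂ × ℂ → ℝ) : Prop := ∀ z v, 0 ≤ (leviForm P z v).re

/-- `P` is strictly plurisubharmonic at `z`. -/
def IsStrictPshAt (P : ℂ × ℂ → ℝ) (z : ℂ × ℂ) : Prop :=
  ∀ v, v ≠ 0 → 0 < (leviForm P z v).re

/-- The Levi-degeneracy set of `P`. -/
def leviDegen (P : ℂ × ℂ → ℝ) : Set (ℂ × ℂ) :=
  {z | ¬ IsStrictPshAt P z}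

/-- One-variable Wirtinger derivative. -/
def wd1 (f : ℂ → ℂ) (z : ℂ) : ℂ :=
  (1 / 2) * (fderiv ℝ f z 1 - Complex.I * fderiv ℝ f z Complex.I)

def wdbar1 (f : ℂ → ℂ) (z : ℂ) : ℂ :=
  (1 / 2) * (fderiv ℝ f z 1 + Complex.I * fderiv ℝ f z Complex.I)

/-- The Laplacian of a function on `ℂ`, as `4 ∂∂̄`. -/
def lap (u : ℂ → ℝ) (z : ℂ) : ℂ := 4 * wd1 (wdbar1 fun w => (u w : ℂ)) z

def IsHarmonic (u : ℂ → ℝ) : Prop := ∀ z, lap u z = 0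

def Subharmonic (u : ℂ → ℝ) : Prop := ∀ z, 0 ≤ (lap u z).re

/-- The Laplacian of a function on `ℂ² ≅ ℝ⁴`. -/
def lap2 (P : ℂ × ℂ → ℝ) (z : ℂ × ℂ) : ℂ :=
  4 * (mixedDeriv P (1, 0) (1, 0) z + mixedDeriv P (0, 1) (0, 1) z)

/-- `P` is a real-valued polynomial in `z₁, z̄₁, z₂, z̄₂`. -/
def IsRealPoly2 (P : ℂ × ℂ → ℝ) : Prop :=
  ∃ Q : MvPolynomial (Fin 4) ℂ,
    ∀ z : ℂ × ℂ, (P z : ℂ) = MvPolynomial.eval ![z.1, conj z.1, z.2, conj z.2] Q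

/-- `u` is a real-valued polynomial in `z, z̄`. -/
def IsRealPoly1 (u : ℂ → ℝ) : Prop :=
  ∃ Q : MvPolynomial (Fin 2) ℂ,
    ∀ z : ℂ, (u z : ℂ) = MvPolynomial.eval ![z, conj z] Q

/-- `F` is a holomorphic polynomial map on `ℂ²`. -/
def IsPolyMap2 (F : ℂ × ℂ → ℂ) : Prop :=
  ∃ Q : MvPolynomial (Fin 2) ℂ, ∀ z : ℂ × ℂ, F z = MvPolynomial.eval ![z.1, z.2] Q

/-- `P` has no pluriharmonic terms: in its (unique) monomial expansion in
`z₁, z̄₁, z₂, z̄₂` every monomial involves both a conjugated and an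
unconjugated variable. Indexing: `0 ↦ z₁`, `1 ↦ z̄₁`, `2 ↦ z₂`, `3 ↦ z̄₂`. -/
def NoPluriharmonicTerms (P : ℂ × ℂ → ℝ) : Prop :=
  ∃ Q : MvPolynomial (Fin 4) ℂ,
    (∀ z : ℂ × ℂ, (P z : ℂ) = MvPolynomial.eval ![z.1, conj z.1, z.2, conj z.2] Q) ∧
    ∀ m ∈ Q.support, (m 1 ≠ 0 ∨ m 3 ≠ 0) ∧ (m 0 ≠ 0 ∨ m 2 ≠ 0)

/-- `P` is pluriharmonic: the real part of an entire function. -/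
def IsPluriharmonic (P : ℂ × ℂ → ℝ) : Prop :=
  ∃ f : ℂ × ℂ → ℂ, Differentiable ℂ f ∧ ∀ z, P z = (f z).re

/-- `P` is homogeneous of degree `d`. -/
def HomogeneousDeg (P : ℂ × ℂ → ℝ) (d : ℕ) : Prop :=
  ∀ t : ℝ, 0 < t → ∀ z : ℂ × ℂ, P (t • z) = t ^ d * P z

/-- The directions `ζ` such that `P` is harmonic along the line `{(ζw, w)}`. -/
def harmDirs (P : ℂ × ℂ → ℝ) : Set ℂ := {ζ | IsHarmonic fun w => P (ζ * w, w)}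

/-- The union of all complex lines through `0` along which `P` is harmonic. -/
def linesUnion (P : ℂ × ℂ → ℝ) : Set (ℂ × ℂ) :=
  {z | (∃ ζ ∈ harmDirs P, z.1 = ζ * z.2) ∨
       (IsHarmonic (fun w => P (w, 0)) ∧ z.2 = 0)}

/-- `P` is harmonic along the smooth part of the set `V`: for every injective
holomorphic parametrization by the unit disc of a piece of `V`, the pullback
of `P` is harmonic. -/
def HarmonicAlong (P : ℂ × ℂ → ℝ) (V : Set (ℂ × ℂ)) : Prop :=
  ∀ φ : ℂ → ℂ × ℂ, DifferentiableOn ℂ φ (Metric.ball 0 1) →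
    Set.InjOn φ (Metric.ball 0 1) → φ '' Metric.ball 0 1 ⊆ V →
    ∀ ζ ∈ Metric.ball (0 : ℂ) 1, lap (fun w => P (φ w)) ζ = 0

/-- `S` contains no complex-analytic subvariety of positive dimension. -/
def NoPosDimVariety (S : Set (ℂ × ℂ)) : Prop :=
  ∀ φ : ℂ → ℂ × ℂ, DifferentiableOn ℂ φ (Metric.ball 0 1) →
    φ '' Metric.ball 0 1 ⊆ S →
    ∀ x ∈ Metric.ball (0 : ℂ) 1, ∀ y ∈ Metric.ball (0 : ℂ) 1, φ x = φ y

/-- Property (A) for a homogeneous polynomial `P`. -/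
def PropertyA (P : ℂ × ℂ → ℝ) : Prop :=
  NoPosDimVariety (leviDegen P \ linesUnion P) ∧
  ∃ W : Set (ℂ × ℂ), IsClosed W ∧ (∀ z ∈ W, ∀ t : ℝ, 0 < t → t • z ∈ W) ∧
    leviDegen P \ linesUnion P ⊆ W ∧ interior W ∩ linesUnion P = ∅

/-- Property (B): there is an entire function all of whose level curves have
smooth part along which `P` is harmonic. -/
def PropertyB (P : ℂ × ℂ → ℝ) : Prop :=
  ∃ H : ℂ × ℂ → ℂ, Differentiable ℂ H ∧ ∀ c : ℂ, HarmonicAlong P (H ⁻¹' {c})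

/-- The anisotropic dilation `(t^{1/m₁}z₁, t^{1/m₂}z₂)`. -/
def wdil (m₁ m₂ : ℕ) (t : ℝ) (z : ℂ × ℂ) : ℂ × ℂ :=
  (((t ^ ((m₁ : ℝ)⁻¹) : ℝ) : ℂ) * z.1, ((t ^ ((m₂ : ℝ)⁻¹) : ℝ) : ℂ) * z.2)

/-- `(m₁,m₂)`-homogeneity with weight `r`. -/
def WHomog (m₁ m₂ : ℕ) (P : ℂ × ℂ → ℝ) (r : ℝ) : Prop :=
  ∀ t : ℝ, 0 < t → ∀ z : ℂ × ℂ, P (wdil m₁ m₂ t z) = t ^ r * P z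

/-- The weighted curve `{z₁^a = ζ z₂^b}`. -/
def wCurve (a b : ℕ) (ζ : ℂ) : Set (ℂ × ℂ) := {z | z.1 ^ a = ζ * z.2 ^ b}

/-- The parameters `ζ ∈ ℂ` of weighted curves along which `P` is harmonic. -/
def wHarmDirs (P : ℂ × ℂ → ℝ) (a b : ℕ) : Set ℂ :=
  {ζ | HarmonicAlong P (wCurve a b ζ)}

/-- The union of all curves in `E(P)` (including the one for `ζ = ∞`). -/
def wEUnion (P : ℂ × ℂ → ℝ) (a b : ℕ) : Set (ℂ × ℂ) :=
  {z | (∃ ζ ∈ wHarmDirs P a b, z.1 ^ a = ζ * z.2 ^ b) ∨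
       (HarmonicAlong P {w : ℂ × ℂ | w.2 = 0} ∧ z.2 = 0)}

/-- Property (A) in the `(m₁,m₂)`-homogeneous setting (with wedges). -/
def PropertyAW (m₁ m₂ : ℕ) (P : ℂ × ℂ → ℝ) : Prop :=
  NoPosDimVariety (leviDegen P \ wEUnion P (m₁ / Nat.gcd m₁ m₂) (m₂ / Nat.gcd m₁ m₂)) ∧
  ∃ W : Set (ℂ × ℂ), IsClosed W ∧ (∀ z ∈ W, ∀ t : ℝ, 0 < t → wdil m₁ m₂ t z ∈ W) ∧
    leviDegen P \ wEUnion P (m₁ / Nat.gcd m₁ m₂) (m₂ / Nat.gcd m₁ m₂) ⊆ W ∧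
    interior W ∩ wEUnion P (m₁ / Nat.gcd m₁ m₂) (m₂ / Nat.gcd m₁ m₂) = ∅

/-! ### The Laplacian along complex lines -/

section SecondDerivative

variable {𝕜 E G : Type*} [NontriviallyNormedField 𝕜] [NormedAddCommGroup E] [NormedSpace 𝕜 E]
  [NormedAddCommGroup G] [NormedSpace 𝕜 G]

lemma hasFDerivAt_fderiv {f : E → G} {z : E} (hf : ContDiffAt 𝕜 2 f z) :
    HasFDerivAt (fderiv 𝕜 f) (fderiv 𝕜 (fderiv 𝕜 f) z) z :=
  ((hf.fderiv_right (m := 1) (by norm_num)).differentiableAt one_ne_zero).hasFDerivAt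

lemma hasFDerivAt_fderiv_apply {f : E → G} {z : E} (hf : ContDiffAt 𝕜 2 f z) (w : E) :
    HasFDerivAt (fun x => fderiv 𝕜 f x w) ((fderiv 𝕜 (fderiv 𝕜 f) z).flip w) z :=
  ((ContinuousLinearMap.apply 𝕜 G w).hasFDerivAt).comp z (hasFDerivAt_fderiv hf)

end SecondDerivative

lemma fderiv_fderiv_symm {𝕜 E G : Type*} [RCLike 𝕜] [NormedAddCommGroup E] [NormedSpace 𝕜 E]
    [NormedAddCommGroup G] [NormedSpace 𝕜 G] {f : E → G} {z : E} (hf : ContDiffAt 𝕜 2 f z)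
    (v w : E) : fderiv 𝕜 (fderiv 𝕜 f) z v w = fderiv 𝕜 (fderiv 𝕜 f) z w v :=
  (hf.isSymmSndFDerivAt (by simp)).eq v w

section SliceLaplacian

variable {E F : Type*} [NormedAddCommGroup E] [NormedSpace ℝ E] [NormedSpace ℂ E]
  [NormedAddCommGroup F] [NormedSpace ℝ F] [NormedSpace ℂ F]

/-- The Laplacian at `0` of `ζ ↦ f (z + ζ • v)`, expressed through the real second derivative. It is
four times the Levi form of `f` at `z` in the direction `v`, and on `ℂ` with `v = 1` it is the
Laplacian. -/
def sliceLaplacian (f : E → ℝ) (z v : E) : ℝ :=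
  fderiv ℝ (fderiv ℝ f) z v v + fderiv ℝ (fderiv ℝ f) z (I • v) (I • v)

lemma sliceLaplacian_smul [IsScalarTower ℝ ℂ E] (f : E → ℝ) (z : E) (c : ℂ) (v : E) :
    sliceLaplacian f z (c • v) = ‖c‖ ^ 2 * sliceLaplacian f z v := by
  have hr (r : ℝ) (x : E) : (r : ℂ) • x = r • x := IsScalarTower.algebraMap_smul ℂ r x
  have hcv : c • v = c.re • v + c.im • (I • v) := by
    rw [← hr, ← hr, smul_smul, ← add_smul, re_add_im]
  have hIcv : I • c • v = c.re • (I • v) - c.im • v := by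
    rw [hcv, smul_add, smul_comm I c.re, smul_comm I c.im, smul_smul I I, I_mul_I, neg_one_smul,
      smul_neg, sub_eq_add_neg]
  rw [sliceLaplacian, sliceLaplacian, hIcv, hcv, ← normSq_eq_norm_sq, normSq_apply]
  simp only [map_add, map_sub, map_smul, add_apply, sub_apply, smul_apply, smul_eq_mul]
  ring

/-- The term involving the second derivative of `φ` drops out because that derivative is complex
bilinear. -/
lemma sliceLaplacian_comp [IsScalarTower ℝ ℂ E] [IsScalarTower ℝ ℂ F] {f : F → ℝ} {φ : E → F}
    {z : E} (hf : ContDiffAt ℝ 2 f (φ z)) (hφ : ContDiffAt ℂ 2 φ z) (v : E) :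
    sliceLaplacian (f ∘ φ) z v = sliceLaplacian f (φ z) (fderiv ℂ φ z v) := by
  have second_deriv (v w : E) : fderiv ℝ (fderiv ℝ (f ∘ φ)) z v w =
      fderiv ℝ (fderiv ℝ f) (φ z) (fderiv ℂ φ z v) (fderiv ℂ φ z w) +
        fderiv ℝ f (φ z) (fderiv ℂ (fderiv ℂ φ) z v w) := by
    have hcomp : ContDiffAt ℝ 2 (f ∘ φ) z := hf.comp z (hφ.restrict_scalars ℝ)
    have first_deriv : (fun x => fderiv ℝ (f ∘ φ) x w) =ᶠ[nhds z]
        fun x => fderiv ℝ f (φ x) (fderiv ℂ φ x w) := by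
      filter_upwards [hφ.continuousAt.eventually (hf.eventually (by simp)),
        hφ.eventually (by simp)] with x hfx hφx
      have hφ' := (hφx.differentiableAt two_ne_zero).hasFDerivAt.restrictScalars ℝ
      rw [((hfx.differentiableAt two_ne_zero).hasFDerivAt.comp x hφ').fderiv]
      rfl
    have hφ' := (hφ.differentiableAt two_ne_zero).hasFDerivAt.restrictScalars ℝ
    have hright := ((hasFDerivAt_fderiv hf).comp z hφ').clm_apply
      ((hasFDerivAt_fderiv_apply hφ w).restrictScalars ℝ)
    have := congrArg (fun L => L v) ((hasFDerivAt_fderiv_apply hcomp w).unique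
      (hright.congr_of_eventuallyEq first_deriv))
    simpa [add_comm] using this
  rw [sliceLaplacian, sliceLaplacian, second_deriv, second_deriv]
  have hI : fderiv ℂ (fderiv ℂ φ) z (I • v) (I • v) = -fderiv ℂ (fderiv ℂ φ) z v v := by
    simp [smul_smul]
  rw [hI]
  simp only [map_neg, map_smul]
  ring

/-- The slice Laplacian is the quadratic form of a positive semidefinite bilinear form, to which
the Cauchy–Schwarz inequality applies. -/
lemma fderiv_fderiv_add_eq_zero_of_sliceLaplacian_eq_zero [IsScalarTower ℝ ℂ E] {f : E → ℝ} {z : E}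
    (hf : ContDiffAt ℝ 2 f z) (hpos : ∀ v, 0 ≤ sliceLaplacian f z v) {v : E}
    (hv : sliceLaplacian f z v = 0) (w : E) :
    fderiv ℝ (fderiv ℝ f) z v w + fderiv ℝ (fderiv ℝ f) z (I • v) (I • w) = 0 := by
  let B : LinearMap.BilinForm ℝ E := LinearMap.mk₂ ℝ
    (fun v w => fderiv ℝ (fderiv ℝ f) z v w + fderiv ℝ (fderiv ℝ f) z (I • v) (I • w))
    (fun _ _ _ => by simp; ring) (fun _ _ _ => by simp [smul_comm I]; ring)
    (fun _ _ _ => by simp; ring) (fun _ _ _ => by simp [smul_comm I]; ring)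
  have hB : LinearMap.IsSymm B := ⟨fun v w =>
    congrArg₂ (· + ·) (fderiv_fderiv_symm hf v w) (fderiv_fderiv_symm hf (I • v) (I • w))⟩
  have hsq : B v w ^ 2 ≤ B v v * B w w := B.apply_sq_le_of_symm hpos hB v w
  rw [show B v v = 0 from hv, zero_mul] at hsq
  exact pow_eq_zero_iff two_ne_zero |>.1 (hsq.antisymm (sq_nonneg _))

end SliceLaplacian

lemma fderiv_wirtinger {E : Type*} [NormedAddCommGroup E] [NormedSpace ℝ E] {f : E → ℝ} {z : E}
    (hf : ContDiffAt ℝ 2 f z) (e e' v : E) :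
    fderiv ℝ (fun x => (1 / 2 : ℂ) * (fderiv ℝ (fun y => (f y : ℂ)) x e +
      I * fderiv ℝ (fun y => (f y : ℂ)) x e')) z v =
      (1 / 2) * (fderiv ℝ (fderiv ℝ f) z v e + I * fderiv ℝ (fderiv ℝ f) z v e') := by
  have fderiv_ofReal : ∀ᶠ x in nhds z, ∀ w,
      fderiv ℝ (fun y => (f y : ℂ)) x w = (fderiv ℝ f x w : ℂ) := by
    filter_upwards [hf.eventually (by simp)] with x hx w
    have hcomp := ofRealCLM.hasFDerivAt.comp x (hx.differentiableAt two_ne_zero).hasFDerivAt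
    exact congrArg (fun L => L w) hcomp.fderiv
  have hderiv (e : E) := ofRealCLM.hasFDerivAt.comp z (hasFDerivAt_fderiv_apply hf e)
  rw [((((hderiv e).add ((hderiv e').const_mul I)).const_mul (1 / 2 : ℂ)).congr_of_eventuallyEq
    (by filter_upwards [fderiv_ofReal] with x hx; simp [hx])).fderiv]
  simp [mul_add]

lemma lap_eq_sliceLaplacian {u : ℂ → ℝ} {z : ℂ} (hu : ContDiffAt ℝ 2 u z) :
    lap u z = sliceLaplacian u z 1 := by
  unfold lap wd1 wdbar1 sliceLaplacian
  rw [fderiv_wirtinger hu, fderiv_wirtinger hu, fderiv_fderiv_symm hu I 1]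
  push_cast
  simp only [smul_eq_mul, mul_one]
  linear_combination (-(fderiv ℝ (fderiv ℝ u) z I I : ℂ)) * I_mul_I

lemma mixedDeriv_eq {P : ℂ × ℂ → ℝ} {z : ℂ × ℂ} (hP : ContDiffAt ℝ 2 P z) (v w : ℂ × ℂ) :
    mixedDeriv P v w z = (1 / 4) * (fderiv ℝ (fderiv ℝ P) z v w +
      I * fderiv ℝ (fderiv ℝ P) z v (I • w) - I * fderiv ℝ (fderiv ℝ P) z (I • v) w +
      fderiv ℝ (fderiv ℝ P) z (I • v) (I • w)) := by
  unfold mixedDeriv wd wdbar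
  rw [fderiv_wirtinger hP, fderiv_wirtinger hP]
  linear_combination (-(fderiv ℝ (fderiv ℝ P) z (I • v) (I • w) : ℂ) / 4) * I_mul_I

lemma leviForm_re_eq {P : ℂ × ℂ → ℝ} {z : ℂ × ℂ} (hP : ContDiffAt ℝ 2 P z) (v : ℂ × ℂ) :
    4 * (leviForm P z v).re = sliceLaplacian P z v := by
  obtain ⟨⟨a, b⟩, ⟨c, d⟩⟩ := v
  have hv : ((⟨a, b⟩, ⟨c, d⟩) : ℂ × ℂ) = a • ((1, 0) : ℂ × ℂ) + b • (I • ((1, 0) : ℂ × ℂ))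
      + c • ((0, 1) : ℂ × ℂ) + d • (I • ((0, 1) : ℂ × ℂ)) := by
    ext <;> simp [Complex.ext_iff]
  have hIv : I • ((⟨a, b⟩, ⟨c, d⟩) : ℂ × ℂ) = a • (I • ((1, 0) : ℂ × ℂ)) + (-b) • ((1, 0) : ℂ × ℂ)
      + c • (I • ((0, 1) : ℂ × ℂ)) + (-d) • ((0, 1) : ℂ × ℂ) := by
    ext <;> simp [Complex.ext_iff]
  have hsymm := fderiv_fderiv_symm hP
  rw [leviForm, sliceLaplacian, hIv, hv]
  simp only [mixedDeriv_eq hP, map_add, map_smul, add_apply, smul_apply, smul_eq_mul]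
  rw [hsymm (0, 1) (1, 0), hsymm (I • (0, 1)) (1, 0), hsymm (0, 1) (I • (1, 0)),
    hsymm (I • (0, 1)) (I • (1, 0)), hsymm (I • (1, 0)) (1, 0), hsymm (I • (0, 1)) (0, 1)]
  simp [Complex.mul_re, Complex.mul_im]
  ring

lemma subharmonic_iff {U : ℂ → ℝ} (hU : ContDiff ℝ 2 U) :
    Subharmonic U ↔ ∀ ξ, 0 ≤ sliceLaplacian U ξ 1 :=
  forall_congr' fun _ => by rw [lap_eq_sliceLaplacian hU.contDiffAt, ofReal_re]

lemma isPsh_iff {P : ℂ × ℂ → ℝ} (hP : ContDiff ℝ 2 P) :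
    IsPsh P ↔ ∀ z v, 0 ≤ sliceLaplacian P z v :=
  forall₂_congr fun _ v => by rw [← leviForm_re_eq hP.contDiffAt v]; simp

lemma isPsh_comp {U : ℂ → ℝ} {F : ℂ × ℂ → ℂ} (hU : ContDiff ℝ 2 U) (hF : ContDiff ℂ 2 F)
    (hsub : Subharmonic U) : IsPsh (U ∘ F) := by
  rw [isPsh_iff (hU.comp (hF.restrict_scalars ℝ))]
  intro z v
  rw [sliceLaplacian_comp hU.contDiffAt hF.contDiffAt,
    show fderiv ℂ F z v = fderiv ℂ F z v • (1 : ℂ) by simp, sliceLaplacian_smul]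
  exact mul_nonneg (by positivity) ((subharmonic_iff hU).1 hsub _)

/-! ### Entire functions of several variables -/

section Entire

variable {E : Type*} [NormedAddCommGroup E] [NormedSpace ℂ E] {f : E → ℂ}

lemma hasDerivAt_comp_add_smul (hf : Differentiable ℂ f) (z v : E) (t : ℂ) :
    HasDerivAt (fun t : ℂ => f (z + t • v)) (fderiv ℂ f (z + t • v) v) t := by
  have hline : HasDerivAt (fun t : ℂ => z + t • v) v t := by
    simpa using ((hasDerivAt_id t).smul_const v).const_add z
  exact (hf _).hasFDerivAt.comp_hasDerivAt t hline

lemma norm_fderiv_le_of_forall_mem_closedBall (hf : Differentiable ℂ f) {z : E} {M : ℝ}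
    (hM : ∀ y ∈ closedBall z 1, ‖f y‖ ≤ M) : ‖fderiv ℂ f z‖ ≤ M := by
  have hM0 : 0 ≤ M := (norm_nonneg _).trans (hM z (by simp))
  refine ContinuousLinearMap.opNorm_le_bound _ hM0 fun v => ?_
  rcases eq_or_ne v 0 with rfl | hv
  · simp
  have hv' : 0 < ‖v‖ := norm_pos_iff.2 hv
  have hline : Differentiable ℂ (fun t : ℂ => f (z + t • v)) :=
    fun t => (hasDerivAt_comp_add_smul hf z v t).differentiableAt
  have hcauchy := norm_deriv_le_of_forall_mem_sphere_norm_le (c := 0) (R := 1 / ‖v‖)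
    (by positivity) hline.diffContOnCl fun t ht => hM _ (by
      rw [mem_sphere_zero_iff_norm] at ht
      simp [norm_smul, ht, hv'.ne'])
  rw [(hasDerivAt_comp_add_smul hf z v 0).deriv] at hcauchy
  simpa using hcauchy

lemma exists_norm_fderiv_le_of_isCompact [ProperSpace E] (hf : Differentiable ℂ f) {K : Set E}
    (hK : IsCompact K) : ∃ M, ∀ z ∈ K, ‖fderiv ℂ f z‖ ≤ M := by
  obtain ⟨M, hM⟩ :=
    (hK.cthickening (r := 1)).exists_bound_of_continuousOn hf.continuous.continuousOn
  exact ⟨M, fun z hz => norm_fderiv_le_of_forall_mem_closedBall hf fun y hy =>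
    hM y (closedBall_subset_cthickening hz 1 hy)⟩

lemma fderiv_apply_eq_circleAverage (hf : Differentiable ℂ f) (z v : E) :
    fderiv ℂ f z v = Real.circleAverage (fun t => t⁻¹ * f (z + t • v)) 0 1 := by
  have hline : Differentiable ℂ (fun t : ℂ => f (z + t • v)) :=
    fun t => (hasDerivAt_comp_add_smul hf z v t).differentiableAt
  have hcauchy :=
    (hline.differentiableOn (s := closedBall 0 1)).deriv_eq_smul_circleIntegral one_pos
  rw [(hasDerivAt_comp_add_smul hf z v 0).deriv, zero_smul, add_zero] at hcauchy
  rw [Real.circleAverage_eq_circleIntegral one_ne_zero, eq_inv_smul_iff₀ two_pi_I_ne_zero,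
    ← hcauchy]
  simp [pow_two, mul_assoc]

/-- Differentiation of Cauchy's formula under the integral sign. -/
lemma differentiable_fderiv_apply [FiniteDimensional ℂ E] (hf : Differentiable ℂ f) (v : E) :
    Differentiable ℂ (fun z => fderiv ℂ f z v) := by
  borelize E
  have : ProperSpace E := FiniteDimensional.proper ℂ E
  have : ProperSpace (E →L[ℂ] ℂ) := FiniteDimensional.proper ℂ _
  intro z₀
  have hf_cont := hf.continuous
  set γ : ℝ → ℂ := circleMap 0 1
  have hγ : Continuous γ := continuous_circleMap 0 1
  have hγ_norm (θ : ℝ) : ‖γ θ‖ = 1 := by simp [γ]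
  have hγ_inv : Continuous fun θ => (γ θ)⁻¹ :=
    hγ.inv₀ fun θ => norm_ne_zero_iff.1 (by simp [hγ_norm])
  obtain ⟨M, hM⟩ := exists_norm_fderiv_le_of_isCompact hf (isCompact_closedBall z₀ (1 + ‖v‖))
  have hbound (z : E) (hz : z ∈ ball z₀ 1) (θ : ℝ) : ‖fderiv ℂ f (z + γ θ • v)‖ ≤ M := by
    refine hM _ (mem_closedBall_iff_norm.2 ?_)
    rw [add_sub_right_comm]
    refine (norm_add_le _ _).trans (add_le_add (mem_ball_iff_norm.1 hz).le ?_)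
    rw [norm_smul, hγ_norm, one_mul]
  have hmeas : MeasureTheory.AEStronglyMeasurable
      (fun θ => (γ θ)⁻¹ • fderiv ℂ f (z₀ + γ θ • v)) MeasureTheory.volume :=
    (hγ_inv.measurable.smul ((measurable_fderiv ℂ f).comp
      (by fun_prop : Continuous fun θ => z₀ + γ θ • v).measurable)).aestronglyMeasurable
  have hint := intervalIntegral.hasFDerivAt_integral_of_dominated_of_fderiv_le
    (μ := MeasureTheory.volume) (a := 0) (b := 2 * Real.pi) (bound := fun _ => M)
    (F := fun z θ => (γ θ)⁻¹ * f (z + γ θ • v))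
    (F' := fun z θ => (γ θ)⁻¹ • fderiv ℂ f (z + γ θ • v)) (ball_mem_nhds z₀ one_pos)
    (.of_forall fun z => (by fun_prop : Continuous fun θ =>
      (γ θ)⁻¹ * f (z + γ θ • v)).aestronglyMeasurable)
    ((by fun_prop : Continuous fun θ => (γ θ)⁻¹ * f (z₀ + γ θ • v)).intervalIntegrable _ _)
    hmeas.restrict
    (.of_forall fun θ _ z hz => by rw [norm_smul, norm_inv, hγ_norm, inv_one, one_mul]
                                   exact hbound z hz θ)
    (by simp)
    (.of_forall fun θ _ z _ =>
      ((hf _).hasFDerivAt.comp z ((hasFDerivAt_id z).add_const _)).const_mul _)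
  simp only [fderiv_apply_eq_circleAverage hf]
  exact hint.differentiableAt.const_smul (2 * Real.pi)⁻¹

lemma contDiff_of_differentiable [FiniteDimensional ℂ E] (hf : Differentiable ℂ f) (n : ℕ) :
    ContDiff ℂ n f := by
  induction n generalizing f with
  | zero => exact contDiff_zero.2 hf.continuous
  | succ n ih =>
    push_cast
    exact contDiff_succ_iff_fderiv_apply.2
      ⟨hf, by simp, fun v => ih (differentiable_fderiv_apply hf v)⟩

lemma eq_zero_of_forall_ofReal {g : ℂ → ℂ} (hg : Differentiable ℂ g) (h : ∀ x : ℝ, g x = 0) :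
    g = 0 := by
  have hacc : Filter.Tendsto ((↑) : ℝ → ℂ) (nhdsWithin 0 {0}ᶜ) (nhdsWithin 0 {0}ᶜ) :=
    tendsto_nhdsWithin_iff.2 ⟨(continuous_ofReal.tendsto' 0 0 ofReal_zero).mono_left inf_le_left,
      by filter_upwards [self_mem_nhdsWithin] with x hx using ofReal_ne_zero.2 hx⟩
  have hana : AnalyticOnNhd ℂ g univ := fun z _ => hg.analyticAt z
  exact funext fun z => hana.eqOn_zero_of_preconnected_of_frequently_eq_zero
    isPreconnected_univ (mem_univ 0) (hacc.frequently (.of_forall h)) (mem_univ z)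

lemma eq_zero_of_eventually_eq_zero (hf : Differentiable ℂ f) {z₀ : E}
    (h : ∀ᶠ z in nhds z₀, f z = 0) : f = 0 := by
  funext z
  have hline : Differentiable ℂ (fun t : ℂ => f (z₀ + t • (z - z₀))) :=
    fun t => (hasDerivAt_comp_add_smul hf z₀ (z - z₀) t).differentiableAt
  have htendsto : Filter.Tendsto (fun t : ℂ => z₀ + t • (z - z₀)) (nhds 0) (nhds z₀) :=
    (by fun_prop : Continuous fun t : ℂ => z₀ + t • (z - z₀)).tendsto' _ _ (by simp)
  have hana : AnalyticOnNhd ℂ (fun t : ℂ => f (z₀ + t • (z - z₀))) univ :=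
    fun t _ => hline.analyticAt t
  simpa using hana.eqOn_zero_of_preconnected_of_eventuallyEq_zero
    isPreconnected_univ (mem_univ 0) (htendsto.eventually h) (mem_univ 1)

lemma eq_zero_of_mul_eq_zero {g : E → ℂ} (hf : Differentiable ℂ f) (hg : Differentiable ℂ g)
    (h : f * g = 0) (hf0 : f ≠ 0) : g = 0 := by
  obtain ⟨z₀, hz₀⟩ := Function.ne_iff.1 hf0
  refine eq_zero_of_eventually_eq_zero hg (z₀ := z₀) ?_
  filter_upwards [hf.continuous.continuousAt.eventually_ne hz₀] with z hz
  exact (mul_eq_zero.1 (congrFun h z)).resolve_left hz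

/-- Apply the one-variable identity theorem to `ζ ↦ G (a + ζ b, ā + ζ b̄)`, which vanishes for real
`ζ`, at `ζ = i`. -/
lemma eq_zero_of_forall_star [StarAddMonoid E] [StarModule ℂ E] {G : E × E → ℂ}
    (hG : Differentiable ℂ G) (h : ∀ z, G (z, star z) = 0) : G = 0 := by
  funext ⟨z, w⟩
  obtain ⟨a, b, hz, hw⟩ : ∃ a b : E, a + I • b = z ∧ star a + I • star b = w := by
    refine ⟨(2⁻¹ : ℂ) • (z + star w), (-I / 2) • (z - star w), ?_, ?_⟩
    · match_scalars
      · linear_combination (-1 / 2 : ℂ) * I_mul_I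
      · linear_combination (1 / 2 : ℂ) * I_mul_I
    · simp only [star_smul, star_add, star_sub, star_star, star_def, map_div₀, map_neg, conj_I,
        map_ofNat, map_inv₀]
      match_scalars
      · linear_combination (1 / 2 : ℂ) * I_mul_I
      · linear_combination (-1 / 2 : ℂ) * I_mul_I
  have hzero := congrFun (eq_zero_of_forall_ofReal
    (g := fun ζ => G ((a, star a) + ζ • (b, star b)))
    (fun ζ => (hasDerivAt_comp_add_smul hG _ _ ζ).differentiableAt) fun x => by
      have := h (a + (x : ℂ) • b)
      rwa [star_add, star_smul, star_def, conj_ofReal] at this) I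
  simpa [hz, hw] using hzero

end Entire

/-! ### Level curves -/

lemma exists_injOn_mapsTo_levelSet {E : Type*} [NormedAddCommGroup E] [NormedSpace ℂ E]
    [CompleteSpace E] {f : E → ℂ} {z v : E} (hf : ContDiffAt ℂ 1 f z) (hdf : fderiv ℂ f z ≠ 0)
    (hv : v ≠ 0) (hfv : fderiv ℂ f z v = 0) :
    ∃ γ : ℂ → E, γ 0 = z ∧ HasDerivAt γ v 0 ∧ ∃ ρ > 0, DifferentiableOn ℂ γ (ball 0 ρ) ∧
      InjOn γ (ball 0 ρ) ∧ MapsTo γ (ball 0 ρ) (f ⁻¹' {f z}) := by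
  have hsurj : (fderiv ℂ f z).range = ⊤ :=
    LinearMap.range_eq_top.2 (LinearMap.surjective
      fun h => hdf (ContinuousLinearMap.coe_injective h))
  let D := (hf.hasStrictFDerivAt one_ne_zero).implicitFunctionDataOfComplemented f _ hsurj
    (ContinuousLinearMap.ker_closedComplemented_of_finiteDimensional_range _)
  have hright : D.rightFun z = 0 := by simp [D]
  let v' : (fderiv ℂ f z).ker := ⟨v, hfv⟩
  let η : ℂ → ℂ × (fderiv ℂ f z).ker := fun ζ => (f z, ζ • v')
  have hη : Filter.Tendsto η (nhds 0) (nhds (D.prodFun z)) :=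
    (by fun_prop : Continuous η).tendsto' _ _ (by simp [η, hright]; rfl)
  have hderiv : HasStrictFDerivAt (D.implicitFunction (f z)) (fderiv ℂ f z).ker.subtypeL 0 :=
    (hf.hasStrictFDerivAt one_ne_zero).to_implicitFunctionOfComplemented hsurj _
  have hdiff : ContDiffAt ℂ 1 D.implicitFunction.uncurry (D.prodFun z) :=
    D.contDiffAt_implicitFunction hf (by simp only [D]; fun_prop) one_ne_zero
  obtain ⟨ρ, hρ, hball⟩ := eventually_nhds_iff_ball.1
    (hη.eventually (D.prodFun_implicitFunction.and (hdiff.eventually (by simp))))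
  refine ⟨fun ζ => D.implicitFunction (f z) (ζ • v'), ?_, ?_, ρ, hρ, fun ζ hζ => ?_,
    fun ζ hζ ξ hξ h => ?_, fun ζ hζ => congrArg Prod.fst (hball ζ hζ).1⟩
  · have hz : D.implicitFunction (f z) (D.rightFun z) = z :=
      D.implicitFunction_apply_image.self_of_nhds
    rwa [hright, ← zero_smul ℂ v'] at hz
  · have hline : HasDerivAt (fun ζ : ℂ => ζ • v') v' 0 := by
      simpa using (hasDerivAt_id (0 : ℂ)).smul_const v'
    rw [← zero_smul ℂ v'] at hderiv
    exact hderiv.hasFDerivAt.comp_hasDerivAt 0 hline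
  · exact (((hball ζ hζ).2.differentiableAt one_ne_zero).comp (f := η) ζ
      (by fun_prop)).differentiableWithinAt
  · have hsmul : ζ • v' = ξ • v' := congrArg Prod.snd
      ((hball ζ hζ).1.symm.trans ((congrArg D.prodFun h).trans (hball ξ hξ).1))
    exact smul_left_injective ℂ (m := v') (fun h => hv (congrArg Subtype.val h)) hsmul

lemma sliceLaplacian_eq_zero_of_harmonicAlong {P : ℂ × ℂ → ℝ} (hP : ContDiff ℝ 2 P)
    {V : Set (ℂ × ℂ)} (hV : HarmonicAlong P V) {γ : ℂ → ℂ × ℂ} {v : ℂ × ℂ} {ρ : ℝ} (hρ : 0 < ρ)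
    (hγ : DifferentiableOn ℂ γ (ball 0 ρ)) (hinj : InjOn γ (ball 0 ρ))
    (hmaps : MapsTo γ (ball 0 ρ) V) (hv : HasDerivAt γ v 0) :
    sliceLaplacian P (γ 0) v = 0 := by
  have hρ0 : (ρ : ℂ) ≠ 0 := ofReal_ne_zero.2 hρ.ne'
  have hscale : MapsTo (fun ζ : ℂ => ρ * ζ) (ball 0 1) (ball 0 ρ) := fun ζ hζ => by
    simpa [abs_of_pos hρ, hρ] using hζ
  set φ : ℂ → ℂ × ℂ := γ ∘ fun ζ => ρ * ζ
  have hφ : DifferentiableOn ℂ φ (ball 0 1) := hγ.comp (by fun_prop) hscale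
  have hφC : ContDiffAt ℂ 2 φ 0 := (hφ.analyticAt (ball_mem_nhds _ one_pos)).contDiffAt
  have hφ0 : φ 0 = γ 0 := by simp [φ]
  have hφ' : fderiv ℂ φ 0 1 = (ρ : ℂ) • v := by
    rw [← mul_zero (ρ : ℂ)] at hv
    have hlin : HasDerivAt (fun ζ : ℂ => ρ * ζ) ρ 0 := by
      simpa using (hasDerivAt_id (0 : ℂ)).const_mul (ρ : ℂ)
    simpa using (hv.scomp 0 hlin).deriv
  have hlap : lap (P ∘ φ) 0 = 0 := hV φ hφ
    (hinj.comp (mul_right_injective₀ hρ0).injOn hscale)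
    (image_subset_iff.2 (hmaps.comp hscale)) 0 (mem_ball_self one_pos)
  rw [lap_eq_sliceLaplacian (hP.contDiffAt.comp 0 (hφC.restrict_scalars ℝ)),
    sliceLaplacian_comp hP.contDiffAt hφC, hφ', sliceLaplacian_smul, hφ0] at hlap
  simpa [hρ.ne'] using hlap

lemma sliceLaplacian_eq_zero_of_fderiv_apply_eq_zero {P : ℂ × ℂ → ℝ} (hP : ContDiff ℝ 2 P)
    {H : ℂ × ℂ → ℂ} (hH : ContDiff ℂ 1 H) (hB : ∀ c, HarmonicAlong P (H ⁻¹' {c})) {z v : ℂ × ℂ}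
    (hz : fderiv ℂ H z ≠ 0) (hv : fderiv ℂ H z v = 0) : sliceLaplacian P z v = 0 := by
  rcases eq_or_ne v 0 with rfl | hv0
  · simp [sliceLaplacian]
  obtain ⟨γ, hγz, hγv, ρ, hρ, hdiff, hinj, hmaps⟩ :=
    exists_injOn_mapsTo_levelSet hH.contDiffAt hz hv0 hv
  rw [← hγz] at hmaps ⊢
  exact sliceLaplacian_eq_zero_of_harmonicAlong hP (hB _) hρ hdiff hinj hmaps hγv

/-- A nonzero entire vector field `X` whose value at every point is a null vector of the Levi form
of `P`. -/
structure IsNullField {E : Type*} [NormedAddCommGroup E] [NormedSpace ℝ E] [NormedSpace ℂ E]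
    (P : E → ℝ) (X : E → E) : Prop where
  differentiable : Differentiable ℂ X
  ne_zero : X ≠ 0
  sliceLaplacian_eq_zero : ∀ z, sliceLaplacian P z (X z) = 0

lemma exists_isNullField_of_propertyB {P : ℂ × ℂ → ℝ} (hP : ContDiff ℝ 2 P) (hB : PropertyB P) :
    ∃ X, IsNullField P X := by
  obtain ⟨H, hH, hB⟩ := hB
  by_cases hdH : ∀ z, fderiv ℂ H z = 0
  · refine ⟨fun _ => (1, 0), by fun_prop, Function.ne_iff.2 ⟨0, by simp⟩, fun z => ?_⟩
    have hline (t : ℂ) : HasDerivAt (fun t : ℂ => z + t • ((1, 0) : ℂ × ℂ)) (1, 0) t := by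
      simpa using ((hasDerivAt_id t).smul_const ((1, 0) : ℂ × ℂ)).const_add z
    simpa using sliceLaplacian_eq_zero_of_harmonicAlong hP (hB (H z)) one_pos
      (fun t _ => (hline t).differentiableAt.differentiableWithinAt)
      (fun s _ t _ h => by simpa using h)
      (fun t _ => is_const_of_fderiv_eq_zero hH hdH _ z) (hline 0)
  · push Not at hdH
    obtain ⟨z₀, hz₀⟩ := hdH
    have happly (z v : ℂ × ℂ) :
        fderiv ℂ H z v = v.1 * fderiv ℂ H z (1, 0) + v.2 * fderiv ℂ H z (0, 1) := by
      rw [← smul_eq_mul, ← smul_eq_mul, ← map_smul, ← map_smul, ← map_add]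
      simp
    refine ⟨fun z => (-fderiv ℂ H z (0, 1), fderiv ℂ H z (1, 0)),
      (differentiable_fderiv_apply hH _).neg.prodMk (differentiable_fderiv_apply hH _),
      fun hX => hz₀ (ContinuousLinearMap.ext fun v => ?_), fun z => ?_⟩
    · obtain ⟨hsnd, hfst⟩ := Prod.mk.inj (congrFun hX z₀)
      rw [happly, neg_eq_zero.1 hsnd, hfst]
      simp
    · by_cases hz : fderiv ℂ H z = 0
      · simp [hz, sliceLaplacian, Prod.mk_zero_zero]
      · exact sliceLaplacian_eq_zero_of_fderiv_apply_eq_zero hP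
          (contDiff_of_differentiable hH 1) hB hz (by rw [happly]; ring)

/-! ### Polarisation -/

section Polarization

variable {E : Type*} [NormedAddCommGroup E] [NormedSpace ℝ E] [NormedSpace ℂ E]
  [IsScalarTower ℝ ℂ E] [StarAddMonoid E] [NormedStarGroup E] [StarModule ℝ E]
  {f : E → ℝ} {T : E × E → ℂ} {X : E → E}

variable (E) in
/-- The embedding of `E` onto the totally real subspace `{(z, z̄)}` of `E × E`. -/
def withStar : E →L[ℝ] E × E :=
  (ContinuousLinearMap.id ℝ E).prod (starL' ℝ : E ≃L[ℝ] E)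

omit [NormedSpace ℂ E] [IsScalarTower ℝ ℂ E] in
@[simp]
lemma withStar_apply (z : E) : withStar E z = (z, star z) := rfl

/-- `T` is a holomorphic extension of `f` from `{(z, z̄)}` to `E × E`: the function `f` with `z̄`
replaced by an independent variable. -/
structure IsPolarization (f : E → ℝ) (T : E × E → ℂ) : Prop where
  contDiff : ContDiff ℂ 3 T
  ofReal_eq : ∀ z, (f z : ℂ) = T (z, star z)

namespace IsPolarization

variable (hT : IsPolarization f T)
include hT

lemma contDiff_real : ContDiff ℝ 2 f := by
  have hf : f = reCLM ∘ T ∘ withStar E := funext fun z => by simp [← hT.ofReal_eq]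
  rw [hf]
  exact reCLM.contDiff.comp
    (((hT.contDiff.of_le (by norm_num)).restrict_scalars ℝ).comp (withStar E).contDiff)

lemma ofReal_fderiv_fderiv (z v w : E) : (fderiv ℝ (fderiv ℝ f) z v w : ℂ) =
    fderiv ℂ (fderiv ℂ T) (z, star z) (v, star v) (w, star w) := by
  have hf : ContDiffAt ℝ 2 f z := hT.contDiff_real.contDiffAt
  have hT2 : ContDiff ℂ 2 T := hT.contDiff.of_le (by norm_num)
  have first_deriv (x : E) : (fderiv ℝ f x w : ℂ) = fderiv ℂ T (x, star x) (w, star w) := by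
    have hleft := ofRealCLM.hasFDerivAt.comp x
      (hT.contDiff_real.differentiable two_ne_zero x).hasFDerivAt
    have hright := ((hT2.differentiable two_ne_zero (withStar E x)).hasFDerivAt.restrictScalars
      ℝ).comp x (withStar E).hasFDerivAt
    exact congrArg (fun L => L w) (hleft.unique (hright.congr_of_eventuallyEq
      (.of_forall hT.ofReal_eq)))
  have hleft := ofRealCLM.hasFDerivAt.comp z (hasFDerivAt_fderiv_apply hf w)
  have hright := ((hasFDerivAt_fderiv_apply (hT2.contDiffAt (x := withStar E z))
    (withStar E w)).restrictScalars ℝ).comp z (withStar E).hasFDerivAt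
  exact congrArg (fun L => L v) (hleft.unique (hright.congr_of_eventuallyEq
    (.of_forall first_deriv)))

variable [StarModule ℂ E]

omit [NormedSpace ℝ E] [IsScalarTower ℝ ℂ E] [StarModule ℝ E] in
lemma conj_symm (z w : E) : conj (T (z, w)) = T (star w, star z) := by
  have hdiff : Differentiable ℂ T := hT.contDiff.differentiable (by norm_num)
  have hconj : Differentiable ℂ fun p : E × E => star (T (star p.2, star p.1)) := fun p => by
    have := (hdiff.comp (differentiable_snd.prodMk differentiable_fst) (star p)).star_star
    rwa [star_star] at this
  have := congrFun (eq_zero_of_forall_star (G := fun p => T p - star (T (star p.2, star p.1)))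
    (hdiff.sub hconj) fun z => by simp [← hT.ofReal_eq]) (star w, star z)
  exact (sub_eq_zero.1 (by simpa using this)).symm

lemma ofReal_fderiv_fderiv_add (z v w : E) :
    (fderiv ℝ (fderiv ℝ f) z v w + fderiv ℝ (fderiv ℝ f) z (I • v) (I • w) : ℂ) =
      2 * (fderiv ℂ (fderiv ℂ T) (z, star z) (v, 0) (0, star w) +
        fderiv ℂ (fderiv ℂ T) (z, star z) (0, star v) (w, 0)) := by
  have hsplit (x : E) : (x, star x) = (x, 0) + (0, star x) := by simp
  have hIsplit (x : E) : (I • x, star (I • x)) = I • (x, 0) - I • (0, star x) := by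
    simp [star_smul]
  rw [hT.ofReal_fderiv_fderiv, hT.ofReal_fderiv_fderiv, hIsplit v, hIsplit w, hsplit v, hsplit w]
  simp only [map_add, map_sub, map_smul, add_apply, sub_apply, smul_apply, smul_eq_mul]
  ring_nf
  simp only [I_sq]
  ring

lemma sliceLaplacian_eq (z v : E) : (sliceLaplacian f z v : ℂ) =
    4 * fderiv ℂ (fderiv ℂ T) (z, star z) (v, 0) (0, star v) := by
  rw [sliceLaplacian, ofReal_add, hT.ofReal_fderiv_fderiv_add, fderiv_fderiv_symm
    (hT.contDiff.of_le (by norm_num)).contDiffAt (0, star v)]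
  ring

lemma fderiv_fderiv_eq_zero_of_isNullField (hpsh : ∀ z v, 0 ≤ sliceLaplacian f z v)
    (hX : IsNullField f X) (z w u : E) :
    fderiv ℂ (fderiv ℂ T) (z, w) (X z, 0) (0, u) = 0 := by
  have hreal (z u : E) : fderiv ℂ (fderiv ℂ T) (z, star z) (X z, 0) (0, u) = 0 := by
    have hnull (w : E) := fderiv_fderiv_add_eq_zero_of_sliceLaplacian_eq_zero
      hT.contDiff_real.contDiffAt (hpsh z) (hX.sliceLaplacian_eq_zero z) w
    have hzero (w : E) := (hT.ofReal_fderiv_fderiv_add z (X z) w).symm.trans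
      ((ofReal_add _ _).symm.trans (ofReal_eq_zero.2 (hnull w)))
    have hu := hzero (star u)
    have hIu := hzero (I • star u)
    have hsmul : ((0 : E), star (I • star u)) = -(I • (0, u)) := by simp [star_smul]
    rw [show (I • star u, (0 : E)) = I • (star u, 0) by simp, hsmul] at hIu
    simp only [map_neg, map_smul, smul_eq_mul, star_star] at hu hIu
    generalize fderiv ℂ (fderiv ℂ T) (z, star z) (0, star (X z)) (star u, 0) = b at hu hIu
    linear_combination hu / 4 + I / 4 * hIu +
      (fderiv ℂ (fderiv ℂ T) (z, star z) (X z, 0) (0, u) - b) / 2 * I_mul_I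
  have hdiff : Differentiable ℂ (fderiv ℂ (fderiv ℂ T)) :=
    ((hT.contDiff.fderiv_right (m := 2) (by norm_num)).fderiv_right (m := 1)
      (by norm_num)).differentiable one_ne_zero
  have hXdiff := hX.differentiable
  exact congrFun (eq_zero_of_forall_star
    (G := fun p => fderiv ℂ (fderiv ℂ T) p (X p.1, 0) (0, u)) (by fun_prop)
    fun z => hreal z u) (z, w)

/-- The mixed second derivatives of `T` along the null field vanish, so `∂_X T` does not depend on
`w`. -/
lemma fderiv_eq_zero_of_isNullField (hpsh : ∀ z v, 0 ≤ sliceLaplacian f z v)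
    (hX : IsNullField f X) (hT0 : ∀ z, T (z, 0) = 0) (z w : E) :
    fderiv ℂ T (z, w) (X z, 0) = 0 := by
  have hT2 : ContDiff ℂ 2 T := hT.contDiff.of_le (by norm_num)
  have hderiv (w : E) : HasFDerivAt (fun w => fderiv ℂ T (z, w) (X z, 0)) (0 : E →L[ℂ] ℂ) w := by
    refine ((hasFDerivAt_fderiv_apply hT2.contDiffAt (X z, 0)).comp w
      (hasFDerivAt_prodMk_right z w)).congr_fderiv (ContinuousLinearMap.ext fun u => ?_)
    exact (fderiv_fderiv_symm hT2.contDiffAt _ _).trans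
      (hT.fderiv_fderiv_eq_zero_of_isNullField hpsh hX z w u)
  have hzero : fderiv ℂ T (z, 0) (X z, 0) = 0 := by
    have := (hT2.differentiable two_ne_zero (z, 0)).hasFDerivAt.comp z (f := fun z => (z, (0 : E)))
      (hasFDerivAt_prodMk_left (𝕜 := ℂ) z (0 : E))
    have h0 := this.unique ((hasFDerivAt_const (0 : ℂ) z).congr_of_eventuallyEq (.of_forall hT0))
    exact congrArg (fun L => L (X z)) h0
  rw [← hzero]
  exact is_const_of_fderiv_eq_zero (fun w => (hderiv w).differentiableAt)
    (fun w => (hderiv w).fderiv) w 0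

end IsPolarization

end Polarization

/-! ### Homogeneous first integrals of a holomorphic vector field -/

section FirstIntegral

namespace IsPolyMap2

variable {f g : ℂ × ℂ → ℂ}

lemma contDiff {𝕜 : Type*} [NontriviallyNormedField 𝕜] [NormedAlgebra 𝕜 ℂ] {n : WithTop ℕ∞}
    (hf : IsPolyMap2 f) : ContDiff 𝕜 n f := by
  obtain ⟨p, hp⟩ := hf
  have hf : f = fun z => MvPolynomial.aeval ![z.1, z.2] p :=
    funext fun z => by rw [hp, ← MvPolynomial.coe_aeval_eq_eval, RingHom.coe_coe]
  rw [hf]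
  refine (AnalyticOnNhd.aeval_mvPolynomial (𝕜 := 𝕜) (s := univ)
    (f := fun z : ℂ × ℂ => ![z.1, z.2]) (fun i => ?_) p).contDiff
  fin_cases i
  exacts [fun _ _ => analyticAt_fst, fun _ _ => analyticAt_snd]

lemma differentiable (hf : IsPolyMap2 f) : Differentiable ℂ f :=
  (hf.contDiff (n := 1)).differentiable one_ne_zero

lemma mul (hf : IsPolyMap2 f) (hg : IsPolyMap2 g) : IsPolyMap2 (f * g) := by
  obtain ⟨⟨p, hp⟩, ⟨q, hq⟩⟩ := hf, hg
  exact ⟨p * q, fun z => by simp [hp, hq]⟩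

end IsPolyMap2

/-- `f` is a polynomial on `ℂ²`, homogeneous of degree `a`, that is constant along the holomorphic
vector field `X`. -/
structure IsFirstIntegral (X : ℂ × ℂ → ℂ × ℂ) (a : ℕ) (f : ℂ × ℂ → ℂ) : Prop where
  isPolyMap : IsPolyMap2 f
  map_smul : ∀ c z, f (c • z) = c ^ a * f z
  fderiv_eq_zero : ∀ z, fderiv ℂ f z (X z) = 0

variable {X : ℂ × ℂ → ℂ × ℂ} {f g : ℂ × ℂ → ℂ} {a b : ℕ}

lemma fderiv_mul_fderiv_comm (hX : Differentiable ℂ X) (hX0 : X ≠ 0) (hf : Differentiable ℂ f)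
    (hg : Differentiable ℂ g) (hfX : ∀ z, fderiv ℂ f z (X z) = 0)
    (hgX : ∀ z, fderiv ℂ g z (X z) = 0) (z u v : ℂ × ℂ) :
    fderiv ℂ f z u * fderiv ℂ g z v = fderiv ℂ f z v * fderiv ℂ g z u := by
  have happly (L : ℂ × ℂ →L[ℂ] ℂ) (w : ℂ × ℂ) : L w = w.1 * L (1, 0) + w.2 * L (0, 1) := by
    rw [← smul_eq_mul, ← smul_eq_mul, ← map_smul, ← map_smul, ← map_add]
    simp
  set jacobian : ℂ × ℂ → ℂ := fun z =>
    fderiv ℂ f z (1, 0) * fderiv ℂ g z (0, 1) - fderiv ℂ f z (0, 1) * fderiv ℂ g z (1, 0)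
    with hjacobian
  have hjacobian_diff : Differentiable ℂ jacobian :=
    ((differentiable_fderiv_apply hf _).mul (differentiable_fderiv_apply hg _)).sub
      ((differentiable_fderiv_apply hf _).mul (differentiable_fderiv_apply hg _))
  have hfX' z := (happly _ _).symm.trans (hfX z)
  have hgX' z := (happly _ _).symm.trans (hgX z)
  have hjacobian_zero : jacobian = 0 := by
    by_cases hfst : (fun z => (X z).1) = 0
    · refine eq_zero_of_mul_eq_zero hX.snd hjacobian_diff (funext fun z => ?_)
        fun hsnd => hX0 (funext fun z => Prod.ext (congrFun hfst z) (congrFun hsnd z))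
      simp only [Pi.mul_apply, Pi.zero_apply, hjacobian]
      linear_combination fderiv ℂ f z (1, 0) * hgX' z - fderiv ℂ g z (1, 0) * hfX' z
    · refine eq_zero_of_mul_eq_zero hX.fst hjacobian_diff (funext fun z => ?_) hfst
      simp only [Pi.mul_apply, Pi.zero_apply, hjacobian]
      linear_combination fderiv ℂ g z (0, 1) * hfX' z - fderiv ℂ f z (0, 1) * hgX' z
  rw [happly (fderiv ℂ f z) u, happly (fderiv ℂ f z) v, happly (fderiv ℂ g z) u,
    happly (fderiv ℂ g z) v]
  have := congrFun hjacobian_zero z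
  simp only [hjacobian, Pi.zero_apply] at this
  linear_combination (u.1 * v.2 - u.2 * v.1) * this

namespace IsFirstIntegral

lemma differentiable (hf : IsFirstIntegral X a f) : Differentiable ℂ f :=
  hf.isPolyMap.differentiable

lemma mul (hf : IsFirstIntegral X a f) (hg : IsFirstIntegral X b g) :
    IsFirstIntegral X (a + b) (f * g) where
  isPolyMap := hf.isPolyMap.mul hg.isPolyMap
  map_smul c z := by
    simp only [Pi.mul_apply, hf.map_smul, hg.map_smul]
    ring
  fderiv_eq_zero z := by
    rw [fderiv_mul (hf.differentiable z) (hg.differentiable z)]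
    simp [hf.fderiv_eq_zero, hg.fderiv_eq_zero]

lemma pow (hf : IsFirstIntegral X a f) (n : ℕ) : IsFirstIntegral X (a * n) (f ^ n) := by
  induction n with
  | zero => exact ⟨⟨1, by simp⟩, by simp, by simp [fderiv_one]⟩
  | succ n ih => exact pow_succ f n ▸ ih.mul hf

lemma of_mul (hX : Differentiable ℂ X) (hf : IsPolyMap2 f) (hg : IsFirstIntegral X b g)
    (hg0 : g ≠ 0) (hfg : IsFirstIntegral X (a + b) (g * f)) : IsFirstIntegral X a f where
  isPolyMap := hf
  map_smul c z := by
    have hf' := hf.differentiable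
    have hg' := hg.differentiable
    obtain ⟨z₀, hz₀⟩ := Function.ne_iff.1 hg0
    refine sub_eq_zero.1 (congrFun (eq_zero_of_mul_eq_zero
      (f := fun p : ℂ × ℂ × ℂ => p.1 ^ b * g p.2)
      (g := fun p : ℂ × ℂ × ℂ => f (p.1 • p.2) - p.1 ^ a * f p.2) (by fun_prop) (by fun_prop)
      (funext fun p => ?_) (Function.ne_iff.2 ⟨(1, z₀), by simpa using hz₀⟩)) (c, z))
    have := hfg.map_smul p.1 p.2
    simp only [Pi.mul_apply, hg.map_smul] at this
    simp only [Pi.mul_apply, Pi.zero_apply]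
    linear_combination this
  fderiv_eq_zero z := by
    have hderiv : Differentiable ℂ (fun z => fderiv ℂ f z (X z)) :=
      (((hf.contDiff (n := 2)).fderiv_right (m := 1) (by norm_num)).differentiable
        one_ne_zero).clm_apply hX
    refine congrFun (eq_zero_of_mul_eq_zero hg.differentiable hderiv (funext fun z => ?_) hg0) z
    have := hfg.fderiv_eq_zero z
    rw [fderiv_mul (hg.differentiable z) (hf.differentiable z)] at this
    simpa [hg.fderiv_eq_zero z] using this

lemma fderiv_apply_self (hf : IsFirstIntegral X a f) (z : ℂ × ℂ) :
    fderiv ℂ f z z = a * f z := by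
  have hray : HasDerivAt (fun t : ℂ => f (z + t • z)) (fderiv ℂ f z z) 0 := by
    simpa using hasDerivAt_comp_add_smul hf.differentiable z z 0
  have hpow : HasDerivAt (fun t : ℂ => (1 + t) ^ a * f z) (a * f z) 0 := by
    simpa using ((((hasDerivAt_id (0 : ℂ)).const_add 1).pow a).mul_const (f z))
  refine hray.unique (hpow.congr_of_eventuallyEq (.of_forall fun t => ?_))
  simp [← hf.map_smul, add_smul]

lemma eq_apply_zero (hf : IsFirstIntegral X 0 f) (z : ℂ × ℂ) : f z = f 0 := by
  simpa using (hf.map_smul 0 z).symm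

variable (hX : Differentiable ℂ X) (hX0 : X ≠ 0)
include hX hX0

/-- The logarithmic derivatives of `f` and `g` agree, so `f / g` is locally constant. -/
lemma exists_eq_smul (ha : a ≠ 0) (hf : IsFirstIntegral X a f) (hg : IsFirstIntegral X a g)
    (hg0 : g ≠ 0) : ∃ c : ℂ, f = c • g := by
  have hlog (z v : ℂ × ℂ) : f z * fderiv ℂ g z v = g z * fderiv ℂ f z v := by
    have := fderiv_mul_fderiv_comm hX hX0 hf.differentiable hg.differentiable hf.fderiv_eq_zero
      hg.fderiv_eq_zero z z v
    rw [hf.fderiv_apply_self, hg.fderiv_apply_self] at this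
    exact mul_left_cancel₀ (Nat.cast_ne_zero.2 ha) (by linear_combination this)
  obtain ⟨z₀, hz₀⟩ := Function.ne_iff.1 hg0
  obtain ⟨ε, hε, hball⟩ := Metric.eventually_nhds_iff_ball.1
    (hg.differentiable.continuous.continuousAt.eventually_ne hz₀)
  have hquot (z : ℂ × ℂ) (hz : z ∈ ball z₀ ε) :
      HasFDerivAt (fun z => f z * (g z)⁻¹) (0 : ℂ × ℂ →L[ℂ] ℂ) z := by
    have hz' : g z ≠ 0 := hball z hz
    refine ((hf.differentiable z).hasFDerivAt.mul ((hasDerivAt_inv hz').comp_hasFDerivAt z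
      (hg.differentiable z).hasFDerivAt)).congr_fderiv (ContinuousLinearMap.ext fun v => ?_)
    simp only [add_apply, smul_apply, smul_eq_mul, zero_apply, Function.comp_apply]
    field_simp
    linear_combination -hlog z v
  refine ⟨f z₀ * (g z₀)⁻¹, sub_eq_zero.1 (eq_zero_of_eventually_eq_zero (z₀ := z₀)
    (hf.differentiable.sub (hg.differentiable.const_smul _)) ?_)⟩
  filter_upwards [ball_mem_nhds z₀ hε] with z hz
  have hconst : f z * (g z)⁻¹ = f z₀ * (g z₀)⁻¹ := isOpen_ball.is_const_of_fderiv_eq_zero (𝕜 := ℂ)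
    (convex_ball z₀ ε).isPreconnected
    (fun z hz => (hquot z hz).differentiableAt.differentiableWithinAt)
    (fun z hz => (hquot z hz).fderiv) hz (mem_ball_self hε)
  have hz' : g z ≠ 0 := hball z hz
  simp [← hconst, hz']

/-- Both `f ^ b` and `g ^ a` have degree `a * b`, hence they are proportional, and unique
factorisation applies. -/
lemma exists_eq_mul (ha : a ≠ 0) (hb : b ≠ 0) (hab : b ≤ a) (hf : IsFirstIntegral X a f)
    (hg : IsFirstIntegral X b g) (hg0 : g ≠ 0) : ∃ h, IsPolyMap2 h ∧ f = g * h := by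
  obtain ⟨c, hc⟩ := exists_eq_smul hX hX0 (mul_ne_zero ha hb) (hf.pow b)
    (mul_comm b a ▸ hg.pow a) (pow_ne_zero a hg0)
  obtain ⟨⟨p, hp⟩, ⟨q, hq⟩⟩ := hf.isPolyMap, hg.isPolyMap
  have hpq : p ^ b = MvPolynomial.C c * q ^ a := by
    refine MvPolynomial.funext fun x => ?_
    have := congrFun hc (x 0, x 1)
    rw [← List.ofFn_inj.1 (by simp : List.ofFn ![x 0, x 1] = List.ofFn x)]
    simpa [hp, hq] using this
  obtain ⟨r, rfl⟩ := (UniqueFactorizationMonoid.pow_dvd_pow_iff_dvd hb).1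
    (hpq ▸ (pow_dvd_pow q hab).mul_left _)
  exact ⟨fun z => MvPolynomial.eval ![z.1, z.2] r, ⟨r, fun _ => rfl⟩,
    funext fun z => by simp [hp, hq]⟩

end IsFirstIntegral

/-- A nonzero first integral of positive degree of which every other one is a multiple of a
power. -/
structure IsPrimitiveFirstIntegral (X : ℂ × ℂ → ℂ × ℂ) (d : ℕ) (F : ℂ × ℂ → ℂ) : Prop
    extends IsFirstIntegral X d F where
  degree_ne_zero : d ≠ 0
  ne_zero : F ≠ 0
  eq_smul_pow : ∀ b g, IsFirstIntegral X b g → g ≠ 0 → ∃ (n : ℕ) (c : ℂ), b = d * n ∧ g = c • F ^ n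

lemma exists_isPrimitiveFirstIntegral (hX : Differentiable ℂ X) (hX0 : X ≠ 0)
    (hf : IsFirstIntegral X a f) (ha : a ≠ 0) (hf0 : f ≠ 0) :
    ∃ d F, IsPrimitiveFirstIntegral X d F := by
  classical
  have hex : ∃ d, d ≠ 0 ∧ ∃ F, F ≠ 0 ∧ IsFirstIntegral X d F := ⟨a, ha, f, hf0, hf⟩
  obtain ⟨d, ⟨hd, F, hF0, hF⟩, hmin⟩ : ∃ d, (d ≠ 0 ∧ ∃ F, F ≠ 0 ∧ IsFirstIntegral X d F) ∧
      ∀ b g, b ≠ 0 → g ≠ 0 → IsFirstIntegral X b g → d ≤ b :=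
    ⟨Nat.find hex, Nat.find_spec hex, fun b g hb hg0 hg => Nat.find_min' hex ⟨hb, g, hg0, hg⟩⟩
  refine ⟨d, F, hF, hd, hF0, fun b => ?_⟩
  induction b using Nat.strong_induction_on with
  | _ b ih =>
    intro g hg hg0
    rcases eq_or_ne b 0 with rfl | hb
    · exact ⟨0, g 0, rfl, funext fun z => by simpa using hg.eq_apply_zero z⟩
    have hdb := hmin b g hb hg0 hg
    obtain ⟨h, hh, rfl⟩ := hg.exists_eq_mul hX hX0 hb hd hdb hF hF0
    obtain ⟨n, c, hn, rfl⟩ := ih (b - d) (by lia) h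
      (.of_mul hX hh hF hF0 (by rwa [Nat.sub_add_cancel hdb])) (right_ne_zero_of_mul hg0)
    exact ⟨n + 1, c, by lia, by rw [mul_smul_comm, pow_succ']⟩

namespace IsPrimitiveFirstIntegral

variable {d : ℕ} {F : ℂ × ℂ → ℂ} (hF : IsPrimitiveFirstIntegral X d F)
include hF

lemma surjective : Function.Surjective F := fun ξ => by
  obtain ⟨z, hz⟩ := Function.ne_iff.1 hF.ne_zero
  obtain ⟨μ, hμ⟩ := IsAlgClosed.exists_pow_nat_eq (ξ / F z) (Nat.pos_of_ne_zero hF.degree_ne_zero)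
  exact ⟨μ • z, by rw [hF.map_smul, hμ, div_mul_cancel₀ _ hz]⟩

lemma degree_dvd (hg : IsFirstIntegral X b g) (hg0 : g ≠ 0) : d ∣ b := by
  obtain ⟨n, -, rfl, -⟩ := hF.eq_smul_pow b g hg hg0
  exact dvd_mul_right d n

lemma eq_mul_pow {z₀ : ℂ × ℂ} (hz₀ : F z₀ = 1) (hg : IsFirstIntegral X b g) (z : ℂ × ℂ) :
    g z = g z₀ * F z ^ (b / d) := by
  by_cases hg0 : g = 0
  · simp [hg0]
  obtain ⟨n, c, rfl, rfl⟩ := hF.eq_smul_pow b g hg hg0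
  simp [hz₀, Nat.mul_div_cancel_left n (Nat.pos_of_ne_zero hF.degree_ne_zero)]

end IsPrimitiveFirstIntegral

end FirstIntegral

/-! ### Bihomogeneous expansions -/

section BihomogeneousExpansion

lemma eq_zero_of_forall_sum_mul_pow_eq_zero {R : Type*} [CommRing R] [IsDomain R] {s : Finset ℕ}
    {c : ℕ → R} {S : Set R} (hS : S.Infinite) (h : ∀ t ∈ S, ∑ n ∈ s, c n * t ^ n = 0) :
    ∀ n ∈ s, c n = 0 := by
  have hzero : ∑ n ∈ s, Polynomial.monomial n (c n) = 0 :=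
    Polynomial.eq_zero_of_infinite_isRoot _ (hS.mono fun t ht => by
      simpa [Polynomial.IsRoot, Polynomial.eval_finsetSum] using h t ht)
  intro n hn
  simpa [Polynomial.finsetSum_coeff, Polynomial.coeff_monomial, hn] using
    congrArg (fun p => Polynomial.coeff p n) hzero

lemma eval_smul_of_isHomogeneous {R σ : Type*} [CommSemiring R] [Finite σ]
    {Q : MvPolynomial σ R} {n : ℕ} (hQ : Q.IsHomogeneous n) (t : R) (x : σ → R) :
    MvPolynomial.eval (t • x) Q = t ^ n * MvPolynomial.eval x Q := by
  cases nonempty_fintype σ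
  rw [MvPolynomial.eval_eq', MvPolynomial.eval_eq', Finset.mul_sum]
  refine Finset.sum_congr rfl fun m hm => ?_
  have hm' : ∑ i, m i = n := by
    rw [← Finsupp.degree_eq_sum]
    exact (hQ.degree_eq_sum_deg_support hm).symm
  simp only [Pi.smul_apply, smul_eq_mul, mul_pow, Finset.prod_mul_distrib,
    Finset.prod_pow_eq_pow_sum, hm']
  ring

lemma eval_homogeneousComponent_eq {R σ : Type*} [CommRing R] [IsDomain R] [Finite σ]
    {Q : MvPolynomial σ R} {n : ℕ} {x : σ → R} {S : Set R} (hS : S.Infinite)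
    (h : ∀ t ∈ S, MvPolynomial.eval (t • x) Q = t ^ n * MvPolynomial.eval x Q) :
    MvPolynomial.eval x (MvPolynomial.homogeneousComponent n Q) = MvPolynomial.eval x Q := by
  classical
  set s : Finset ℕ := insert n (Finset.range (Q.totalDegree + 1)) with hs
  have hsum : Q = ∑ k ∈ s, MvPolynomial.homogeneousComponent k Q := by
    conv_lhs => rw [← MvPolynomial.sum_homogeneousComponent Q]
    refine Finset.sum_subset (Finset.subset_insert _ _) fun k _ hk => ?_
    exact MvPolynomial.homogeneousComponent_eq_zero _ _ (by simpa using hk)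
  have hcoeff := eq_zero_of_forall_sum_mul_pow_eq_zero (s := s) (c := fun k =>
    MvPolynomial.eval x (MvPolynomial.homogeneousComponent k Q) -
      if k = n then MvPolynomial.eval x Q else 0) hS (fun t ht => by
    have heval : MvPolynomial.eval (t • x) Q =
        ∑ k ∈ s, MvPolynomial.eval x (MvPolynomial.homogeneousComponent k Q) * t ^ k := by
      conv_lhs => rw [hsum, map_sum]
      refine Finset.sum_congr rfl fun k _ => ?_
      rw [eval_smul_of_isHomogeneous (MvPolynomial.homogeneousComponent_isHomogeneous k Q),
        mul_comm]
    have hn : n ∈ s := Finset.mem_insert_self n _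
    simp [sub_mul, ← heval, h t ht, hn, mul_comm (t ^ n)]) n (by simp [hs])
  simpa [sub_eq_zero] using hcoeff

lemma exists_homogeneous_representation {P : ℂ × ℂ → ℝ} {D : ℕ} (hnt : NoPluriharmonicTerms P)
    (hhom : HomogeneousDeg P D) :
    ∃ Q : MvPolynomial (Fin 4) ℂ,
      (∀ z : ℂ × ℂ, (P z : ℂ) = MvPolynomial.eval ![z.1, conj z.1, z.2, conj z.2] Q) ∧
      ∀ m ∈ Q.support, (m 0 + m 2) + (m 1 + m 3) = D ∧ 0 < m 0 + m 2 ∧ 0 < m 1 + m 3 := by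
  obtain ⟨Q, hQ, hsupp⟩ := hnt
  refine ⟨MvPolynomial.homogeneousComponent D Q, fun z => ?_, fun m hm => ?_⟩
  · have hinf : ((fun t : ℝ => (t : ℂ)) '' Ioi 0).Infinite :=
      (Ioi_infinite 0).image ofReal_injective.injOn
    rw [hQ, eval_homogeneousComponent_eq hinf]
    rintro _ ⟨t, ht, rfl⟩
    have := congrArg (fun x : ℝ => (x : ℂ)) (hhom t ht z)
    simp only [ofReal_mul, ofReal_pow, hQ] at this
    rw [← this]
    simp
  · simp only [MvPolynomial.support_homogeneousComponent, Finset.mem_filter] at hm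
    have hne := hsupp m hm.1
    have hdeg := hm.2
    rw [Finsupp.degree_eq_sum, Fin.sum_univ_four] at hdeg
    lia

/-- The decomposition of a real polynomial `P`, homogeneous of degree `D` and without pluriharmonic
terms, into its parts of degree `b` in `z̄` and `D - b` in `z`. The function `T b` is the polarised
part: in `T b (z, w)` the variable `w` stands for `z̄`. -/
structure IsBihomogeneousExpansion (P : ℂ × ℂ → ℝ) (D : ℕ)
    (T : ℕ → (ℂ × ℂ) × (ℂ × ℂ) → ℂ) : Prop where
  differentiable : ∀ b, Differentiable ℂ (T b)
  isPolyMap : ∀ b w, IsPolyMap2 fun z => T b (z, w)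
  smul_left : ∀ b c z w, T b (c • z, w) = c ^ (D - b) * T b (z, w)
  smul_right : ∀ b c z w, T b (z, c • w) = c ^ b * T b (z, w)
  ofReal_eq : ∀ z, (P z : ℂ) = ∑ b ∈ Finset.Ioo 0 D, T b (z, star z)

lemma exists_isBihomogeneousExpansion {P : ℂ × ℂ → ℝ} {D : ℕ} (hnt : NoPluriharmonicTerms P)
    (hhom : HomogeneousDeg P D) : ∃ T, IsBihomogeneousExpansion P D T := by
  obtain ⟨Q, hQ, hsupp⟩ := exists_homogeneous_representation hnt hhom
  refine ⟨fun b p => ∑ m ∈ Q.support with m 1 + m 3 = b,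
    Q.coeff m * (p.1.1 ^ m 0 * p.2.1 ^ m 1 * p.1.2 ^ m 2 * p.2.2 ^ m 3),
    fun b => by fun_prop, fun b w => ?_, fun b c z w => ?_, fun b c z w => ?_, fun z => ?_⟩
  · refine ⟨∑ m ∈ Q.support with m 1 + m 3 = b, MvPolynomial.C (Q.coeff m * w.1 ^ m 1 * w.2 ^ m 3) *
      (MvPolynomial.X 0 ^ m 0 * MvPolynomial.X 1 ^ m 2), fun z => ?_⟩
    simp only [map_sum, map_mul, map_pow, MvPolynomial.eval_C, MvPolynomial.eval_X]
    exact Finset.sum_congr rfl fun m _ => by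
      simp only [Matrix.cons_val_zero, Matrix.cons_val_one]
      ring
  · rw [Finset.mul_sum]
    refine Finset.sum_congr rfl fun m hm => ?_
    obtain ⟨hm, hb⟩ := Finset.mem_filter.1 hm
    rw [← (hsupp m hm).1, hb, Nat.add_sub_cancel]
    simp only [Prod.smul_fst, Prod.smul_snd, smul_eq_mul]
    ring
  · rw [Finset.mul_sum]
    refine Finset.sum_congr rfl fun m hm => ?_
    obtain ⟨-, rfl⟩ := Finset.mem_filter.1 hm
    simp only [Prod.smul_fst, Prod.smul_snd, smul_eq_mul]
    ring
  · rw [hQ, MvPolynomial.eval_eq']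
    rw [Finset.sum_fiberwise_of_maps_to (g := fun m : Fin 4 →₀ ℕ => m 1 + m 3)]
    · exact Finset.sum_congr rfl fun m _ => by simp [Fin.prod_univ_four]
    · intro m hm
      have := hsupp m hm
      rw [Finset.mem_Ioo]
      lia

namespace IsBihomogeneousExpansion

variable {P : ℂ × ℂ → ℝ} {D : ℕ} {T : ℕ → (ℂ × ℂ) × (ℂ × ℂ) → ℂ}
  (hT : IsBihomogeneousExpansion P D T)
include hT

lemma isPolarization : IsPolarization P fun p => ∑ b ∈ Finset.Ioo 0 D, T b p where
  contDiff := by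
    have := hT.differentiable
    exact contDiff_of_differentiable (by fun_prop) 3
  ofReal_eq := hT.ofReal_eq

lemma conj_symm {b : ℕ} (hb : b ∈ Finset.Ioo 0 D) (z w : ℂ × ℂ) :
    conj (T b (z, w)) = T (D - b) (star w, star z) := by
  refine sub_eq_zero.1 (eq_zero_of_forall_sum_mul_pow_eq_zero infinite_univ
    (c := fun b => conj (T b (z, w)) - T (D - b) (star w, star z)) (fun μ _ => ?_) b hb)
  have hreflect : ∑ b ∈ Finset.Ioo 0 D, T (D - b) (star w, star z) * μ ^ b =
      ∑ b ∈ Finset.Ioo 0 D, T b (star w, star z) * μ ^ (D - b) :=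
    Finset.sum_nbij' (D - ·) (D - ·) (by simp; lia) (by simp; lia) (by simp; lia) (by simp; lia)
      fun b hb => by rw [Nat.sub_sub_self (Finset.mem_Ioo.1 hb).2.le]
  have hsymm := hT.isPolarization.conj_symm z (conj μ • w)
  simp only [map_sum, hT.smul_right, map_mul, map_pow, conj_conj, star_smul,
    show star (conj μ) = μ from conj_conj μ, hT.smul_left] at hsymm
  simp only [sub_mul, Finset.sum_sub_distrib, hreflect]
  simp only [mul_comm _ (μ ^ _), hsymm, sub_self]

lemma fderiv_eq_zero_of_isNullField (hpsh : ∀ z v, 0 ≤ sliceLaplacian P z v)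
    {X : ℂ × ℂ → ℂ × ℂ} (hX : IsNullField P X) {b : ℕ} (hb : b ∈ Finset.Ioo 0 D)
    (w z : ℂ × ℂ) : fderiv ℂ (fun z => T b (z, w)) z (X z) = 0 := by
  have hslice (b : ℕ) (w : ℂ × ℂ) : Differentiable ℂ fun z => T b (z, w) :=
    (hT.isPolyMap b w).differentiable
  refine eq_zero_of_forall_sum_mul_pow_eq_zero infinite_univ
    (c := fun b => fderiv ℂ (fun z => T b (z, w)) z (X z)) (fun μ _ => ?_) b hb
  have hzero (z : ℂ × ℂ) : ∑ b ∈ Finset.Ioo 0 D, T b (z, 0) = 0 :=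
    Finset.sum_eq_zero fun b hb => by
      simpa [(Finset.mem_Ioo.1 hb).1.ne'] using hT.smul_right b 0 z 0
  have hnull := hT.isPolarization.fderiv_eq_zero_of_isNullField hpsh hX hzero z (μ • w)
  have hleft := (hT.isPolarization.contDiff.differentiable (by norm_num)
    (z, μ • w)).hasFDerivAt.comp (x := z) (f := fun z => (z, μ • w))
    (hasFDerivAt_prodMk_left z (μ • w))
  have hright : HasFDerivAt (fun z => ∑ b ∈ Finset.Ioo 0 D, T b (z, μ • w))
      (∑ b ∈ Finset.Ioo 0 D, fderiv ℂ (fun z => T b (z, μ • w)) z) z :=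
    HasFDerivAt.fun_sum fun b _ => (hslice b (μ • w) z).hasFDerivAt
  have := congrArg (fun L => L (X z)) (hleft.unique hright)
  simp only [ContinuousLinearMap.comp_apply, ContinuousLinearMap.inl_apply, hnull,
    sum_apply, hT.smul_right] at this
  rw [this]
  refine Finset.sum_congr rfl fun b _ => ?_
  rw [fderiv_const_mul (hslice b w z), smul_apply, smul_eq_mul, mul_comm]

lemma isFirstIntegral (hpsh : ∀ z v, 0 ≤ sliceLaplacian P z v) {X : ℂ × ℂ → ℂ × ℂ}
    (hX : IsNullField P X) {b : ℕ} (hb : b ∈ Finset.Ioo 0 D) (w : ℂ × ℂ) :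
    IsFirstIntegral X (D - b) fun z => T b (z, w) where
  isPolyMap := hT.isPolyMap b w
  map_smul c z := hT.smul_left b c z w
  fderiv_eq_zero := hT.fderiv_eq_zero_of_isNullField hpsh hX hb w

end IsBihomogeneousExpansion

end BihomogeneousExpansion

/-! ### The factorisation through a first integral -/

section Factorization

/-- `U` is the real polynomial `∑ r c ξ^(j-c) ξ̄^c`, homogeneous of degree `j` and without harmonic
terms. -/
def HasMixedExpansion (U : ℂ → ℝ) (j : ℕ) (r : ℕ → ℂ) : Prop :=
  ∀ ξ, (U ξ : ℂ) = ∑ c ∈ Finset.Ioo 0 j, r c * (ξ ^ (j - c) * conj ξ ^ c)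

lemma sum_Ioo_mul_of_dvd {M : Type*} [AddCommMonoid M] {d : ℕ} (hd : 0 < d) (j : ℕ) {f : ℕ → M}
    (hf : ∀ b ∈ Finset.Ioo 0 (d * j), f b ≠ 0 → d ∣ b) :
    ∑ b ∈ Finset.Ioo 0 (d * j), f b = ∑ c ∈ Finset.Ioo 0 j, f (d * c) := by
  refine (Finset.sum_bij_ne_zero (fun c _ _ => d * c) (fun c hc _ => ?_)
    (fun c _ _ c' _ _ h => Nat.eq_of_mul_eq_mul_left hd h) (fun b hb hb0 => ?_)
    fun _ _ _ => rfl).symm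
  · simpa [hd] using hc
  · obtain ⟨c, rfl⟩ := hf b hb hb0
    exact ⟨c, by simpa [hd] using hb, hb0, rfl⟩

namespace IsBihomogeneousExpansion

variable {P : ℂ × ℂ → ℝ} {D d : ℕ} {T : ℕ → (ℂ × ℂ) × (ℂ × ℂ) → ℂ} {X : ℂ × ℂ → ℂ × ℂ}
  {F : ℂ × ℂ → ℂ} {z₀ : ℂ × ℂ} (hT : IsBihomogeneousExpansion P D T)
include hT

lemma exists_apply_ne_zero {z : ℂ × ℂ} (hz : P z ≠ 0) :
    ∃ b ∈ Finset.Ioo 0 D, T b (z, star z) ≠ 0 :=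
  Finset.exists_ne_zero_of_sum_ne_zero (by rw [← hT.ofReal_eq]; exact ofReal_ne_zero.2 hz)

variable (hint : ∀ b ∈ Finset.Ioo 0 D, ∀ w, IsFirstIntegral X (D - b) fun z => T b (z, w))
  (hF : IsPrimitiveFirstIntegral X d F)
include hint hF

/-- By Hermitian symmetry, `T b (z, star z)` depends on each of its arguments through `F z` only. -/
lemma apply_star_eq (hz₀ : F z₀ = 1) {b : ℕ} (hb : b ∈ Finset.Ioo 0 D) (z : ℂ × ℂ) :
    T b (z, star z) = T b (z₀, star z₀) * (F z ^ ((D - b) / d) * conj (F z) ^ (b / d)) := by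
  obtain ⟨hb0, hbD⟩ := Finset.mem_Ioo.1 hb
  have hb' : D - b ∈ Finset.Ioo 0 D := by rw [Finset.mem_Ioo]; lia
  have hsymm (w : ℂ × ℂ) : T b (z₀, star w) = conj (T (D - b) (w, star z₀)) := by
    simp [hT.conj_symm hb', Nat.sub_sub_self hbD.le]
  have hright := hF.eq_mul_pow hz₀ (hint _ hb' (star z₀)) z
  rw [hF.eq_mul_pow hz₀ (hint b hb _) z, hsymm z, hright, map_mul, ← hsymm, map_pow,
    Nat.sub_sub_self hbD.le]
  ring

lemma degree_dvd_of_apply_ne_zero {b : ℕ} (hb : b ∈ Finset.Ioo 0 D) {z : ℂ × ℂ}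
    (h : T b (z, star z) ≠ 0) : d ∣ D - b ∧ d ∣ b := by
  obtain ⟨hb0, hbD⟩ := Finset.mem_Ioo.1 hb
  have hb' : D - b ∈ Finset.Ioo 0 D := by rw [Finset.mem_Ioo]; lia
  refine ⟨hF.degree_dvd (hint b hb (star z)) (Function.ne_iff.2 ⟨z, h⟩), ?_⟩
  rw [← Nat.sub_sub_self hbD.le]
  refine hF.degree_dvd (hint _ hb' (star z)) (Function.ne_iff.2 ⟨z, ?_⟩)
  have := hT.conj_symm hb z (star z)
  rw [star_star] at this
  simpa [← this] using h

lemma exists_eq_comp (hP : P ≠ 0) : ∃ U j r, HasMixedExpansion U j r ∧ P = U ∘ F := by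
  obtain ⟨z, hz⟩ := Function.ne_iff.1 hP
  obtain ⟨b, hb, hTb⟩ := hT.exists_apply_ne_zero hz
  obtain ⟨hdvd, hdvd'⟩ := hT.degree_dvd_of_apply_ne_zero hint hF hb hTb
  obtain ⟨j, rfl⟩ : d ∣ D := by
    simpa [Nat.sub_add_cancel (Finset.mem_Ioo.1 hb).2.le] using hdvd.add hdvd'
  obtain ⟨z₀, hz₀⟩ := hF.surjective 1
  have hd := Nat.pos_of_ne_zero hF.degree_ne_zero
  have hPF (z : ℂ × ℂ) : (P z : ℂ) = ∑ c ∈ Finset.Ioo 0 j,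
      T (d * c) (z₀, star z₀) * (F z ^ (j - c) * conj (F z) ^ c) := by
    rw [hT.ofReal_eq, sum_Ioo_mul_of_dvd hd j fun b hb h =>
      (hT.degree_dvd_of_apply_ne_zero hint hF hb h).2]
    refine Finset.sum_congr rfl fun c hc => ?_
    rw [hT.apply_star_eq hint hF hz₀ (by simpa [hd] using hc), ← Nat.mul_sub,
      Nat.mul_div_cancel_left _ hd, Nat.mul_div_cancel_left _ hd]
  obtain ⟨lift, hlift⟩ := hF.surjective.hasRightInverse
  have hU : HasMixedExpansion (P ∘ lift) j fun c => T (d * c) (z₀, star z₀) := fun ξ => by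
    simp [hPF, hlift ξ]
  exact ⟨P ∘ lift, j, _, hU, funext fun z => ofReal_injective ((hPF z).trans (hU (F z)).symm)⟩

end IsBihomogeneousExpansion

end Factorization

/-! ### Sign of the Laplacian of `U` -/

section LaplacianOfU

lemma continuous_sliceLaplacian {E : Type*} [NormedAddCommGroup E] [NormedSpace ℝ E]
    [NormedSpace ℂ E] {f : E → ℝ} (hf : ContDiff ℝ 2 f) (v : E) :
    Continuous fun z => sliceLaplacian f z v := by
  have : Continuous (fderiv ℝ (fderiv ℝ f)) :=
    ((hf.fderiv_right (m := 1) (by norm_num)).fderiv_right (m := 0) (by norm_num)).continuous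
  unfold sliceLaplacian
  fun_prop

lemma nonneg_of_forall_ne {α : Type*} [TopologicalSpace α] {a : α} [(nhdsWithin a {a}ᶜ).NeBot]
    {u : α → ℝ} (hu : ContinuousAt u a) (h : ∀ x ≠ a, 0 ≤ u x) (x : α) : 0 ≤ u x := by
  by_cases hx : x = a
  · subst hx
    refine ge_of_tendsto (x := nhdsWithin x {x}ᶜ) (hu.mono_left nhdsWithin_le_nhds) ?_
    filter_upwards [self_mem_nhdsWithin] with y hy using h y hy
  · exact h x hx

/-- By Euler's identity, `dF_z z = d F(z)` does not vanish where `F` does not, so the sign of `ΔU`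
at `F z` is that of the Laplacian of `U ∘ F` in the direction `z`. -/
lemma IsPrimitiveFirstIntegral.subharmonic_of_isPsh_comp {X : ℂ × ℂ → ℂ × ℂ} {d : ℕ}
    {F : ℂ × ℂ → ℂ} (hF : IsPrimitiveFirstIntegral X d F) {U : ℂ → ℝ} (hU : ContDiff ℝ 2 U)
    (hpsh : IsPsh (U ∘ F)) : Subharmonic U := by
  have hF2 : ContDiff ℂ 2 F := hF.isPolyMap.contDiff
  rw [isPsh_iff (hU.comp (hF2.restrict_scalars ℝ))] at hpsh
  refine (subharmonic_iff hU).2 (nonneg_of_forall_ne (a := 0)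
    (continuous_sliceLaplacian hU 1).continuousAt fun ξ hξ => ?_)
  obtain ⟨z, rfl⟩ := hF.surjective ξ
  have h := hpsh z z
  rw [sliceLaplacian_comp hU.contDiffAt hF2.contDiffAt, hF.fderiv_apply_self, ← mul_one (_ * _),
    ← smul_eq_mul, sliceLaplacian_smul] at h
  have hdξ := mul_ne_zero (Nat.cast_ne_zero.2 hF.degree_ne_zero) hξ
  exact nonneg_of_mul_nonneg_right h (pow_pos (norm_pos_iff.2 hdξ) 2)

lemma hasFDerivAt_fst_pow_mul_snd_pow {𝕜 : Type*} [NontriviallyNormedField 𝕜] (m n : ℕ)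
    (p : 𝕜 × 𝕜) : HasFDerivAt (fun p : 𝕜 × 𝕜 => p.1 ^ m * p.2 ^ n)
      (p.1 ^ m • (n • p.2 ^ (n - 1)) • ContinuousLinearMap.snd 𝕜 𝕜 𝕜 +
        p.2 ^ n • (m • p.1 ^ (m - 1)) • ContinuousLinearMap.fst 𝕜 𝕜 𝕜) p :=
  (hasFDerivAt_fst.pow m).fun_mul (hasFDerivAt_snd.pow n)

namespace HasMixedExpansion

variable {U : ℂ → ℝ} {j : ℕ} {r : ℕ → ℂ} (hU : HasMixedExpansion U j r)
include hU

lemma isRealPoly1 : IsRealPoly1 U :=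
  ⟨∑ c ∈ Finset.Ioo 0 j, MvPolynomial.C (r c) *
    (MvPolynomial.X 0 ^ (j - c) * MvPolynomial.X 1 ^ c), fun ξ => by simp [hU ξ]⟩

lemma isPolarization : IsPolarization U
    fun p => ∑ c ∈ Finset.Ioo 0 j, r c * (p.1 ^ (j - c) * p.2 ^ c) where
  contDiff := by fun_prop
  ofReal_eq := hU

lemma map_ofReal_mul (t : ℝ) (ξ : ℂ) : U (t * ξ) = t ^ j * U ξ := by
  refine ofReal_injective ?_
  push_cast
  rw [hU, hU, Finset.mul_sum]
  refine Finset.sum_congr rfl fun c hc => ?_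
  rw [← Nat.sub_add_cancel (Finset.mem_Ioo.1 hc).2.le, pow_add, Nat.add_sub_cancel, map_mul,
    conj_ofReal, mul_pow, mul_pow]
  ring

lemma sliceLaplacian_one (ξ : ℂ) : (sliceLaplacian U ξ 1 : ℂ) = 4 * ∑ c ∈ Finset.Ioo 0 j,
    r c * (((j - c : ℕ) : ℂ) * ξ ^ (j - c - 1) * (c * conj ξ ^ (c - 1))) := by
  have hT := hU.isPolarization.contDiff.of_le (m := 2) (by norm_num)
  have first_deriv (p : ℂ × ℂ) : fderiv ℂ (fun p : ℂ × ℂ => ∑ c ∈ Finset.Ioo 0 j,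
      r c * (p.1 ^ (j - c) * p.2 ^ c)) p (0, 1) =
      ∑ c ∈ Finset.Ioo 0 j, r c * c * (p.1 ^ (j - c) * p.2 ^ (c - 1)) := by
    rw [(HasFDerivAt.fun_sum fun c _ =>
      (hasFDerivAt_fst_pow_mul_snd_pow (j - c) c p).const_mul (r c)).fderiv]
    simp [mul_left_comm, mul_assoc]
  have second_deriv := hasFDerivAt_fderiv_apply (hT.contDiffAt (x := (ξ, star ξ))) (0, 1)
  simp only [first_deriv] at second_deriv
  rw [hU.isPolarization.sliceLaplacian_eq, star_one, ← ContinuousLinearMap.flip_apply,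
    second_deriv.unique (HasFDerivAt.fun_sum fun c _ =>
      (hasFDerivAt_fst_pow_mul_snd_pow (j - c) (c - 1) (ξ, star ξ)).const_mul (r c * c))]
  simp [mul_comm, mul_left_comm, mul_assoc]

/-- Multiplying `ΔU` by `ξ ^ j` and using `ξ ξ̄ = 1` gives a nonzero polynomial in `ξ`. -/
lemma finite_setOf_sliceLaplacian_eq_zero (hU0 : U ≠ 0) :
    {ξ : ℂ | ‖ξ‖ = 1 ∧ sliceLaplacian U ξ 1 = 0}.Finite := by
  by_contra hinf
  have hinj : InjOn (fun c => 2 * (j - c)) (Finset.Ioo 0 j) := fun c hc c' hc' h => by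
    simp only [Finset.coe_Ioo, mem_Ioo] at hc hc' h
    lia
  have hcoeff := eq_zero_of_forall_sum_mul_pow_eq_zero (s := (Finset.Ioo 0 j).image _)
    (c := fun n => r (j - n / 2) * ((n / 2 : ℕ) : ℂ) * ((j - n / 2 : ℕ) : ℂ)) hinf
    fun ξ ⟨hnorm, hzero⟩ => by
      have hlap := hU.sliceLaplacian_one ξ
      have hconj : ξ * conj ξ = 1 := by simp [mul_conj, normSq_eq_norm_sq, hnorm]
      rw [hzero, ofReal_zero, zero_eq_mul, or_iff_right (OfNat.ofNat_ne_zero 4)] at hlap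
      rw [Finset.sum_image hinj, ← mul_zero (ξ ^ j), ← hlap, Finset.mul_sum]
      refine Finset.sum_congr rfl fun c hc => ?_
      obtain ⟨hc0, hcj⟩ := Finset.mem_Ioo.1 hc
      have hpow : ξ ^ (2 * (j - c)) = ξ ^ j * ξ ^ (j - c - 1) * conj ξ ^ (c - 1) := by
        rw [← pow_add, show j + (j - c - 1) = 2 * (j - c) + (c - 1) by lia, pow_add, mul_assoc,
          ← mul_pow, hconj, one_pow, mul_one]
      simp only [Nat.mul_div_cancel_left _ two_pos, Nat.sub_sub_self hcj.le, hpow]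
      ring
  refine hU0 (funext fun ξ => ofReal_injective ?_)
  rw [hU, Pi.zero_apply, ofReal_zero]
  refine Finset.sum_eq_zero fun c hc => ?_
  obtain ⟨hc0, hcj⟩ := Finset.mem_Ioo.1 hc
  have := hcoeff _ (Finset.mem_image_of_mem _ hc)
  simp only [Nat.mul_div_cancel_left _ two_pos, Nat.sub_sub_self hcj.le, mul_eq_zero,
    Nat.cast_eq_zero, hc0.ne', (Nat.sub_pos_of_lt hcj).ne', or_false] at this
  rw [this, zero_mul]

end HasMixedExpansion

end LaplacianOfU

/-! ### Bumping a subharmonic function of one variable -/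

section SliceLaplacianRules

variable {E : Type*} [NormedAddCommGroup E] [NormedSpace ℝ E] [NormedSpace ℂ E]

lemma sliceLaplacian_const (c : ℝ) (z v : E) : sliceLaplacian (fun _ => c) z v = 0 := by
  simp [sliceLaplacian]

variable {f g : E → ℝ} (hf : ContDiff ℝ 2 f) (hg : ContDiff ℝ 2 g)

include hf hg in
lemma sliceLaplacian_add (z v : E) :
    sliceLaplacian (fun x => f x + g x) z v = sliceLaplacian f z v + sliceLaplacian g z v := by
  have first_deriv : fderiv ℝ (fun x => f x + g x) = fun x => fderiv ℝ f x + fderiv ℝ g x :=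
    funext fun x => fderiv_fun_add (hf.differentiable two_ne_zero x)
      (hg.differentiable two_ne_zero x)
  rw [sliceLaplacian, first_deriv,
    ((hasFDerivAt_fderiv hf.contDiffAt).fun_add (hasFDerivAt_fderiv hg.contDiffAt)).fderiv]
  simp only [sliceLaplacian, add_apply]
  ring

include hf hg in
lemma sliceLaplacian_mul (z v : E) :
    sliceLaplacian (fun x => f x * g x) z v =
      f z * sliceLaplacian g z v + g z * sliceLaplacian f z v +
      2 * (fderiv ℝ f z v * fderiv ℝ g z v + fderiv ℝ f z (I • v) * fderiv ℝ g z (I • v)) := by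
  have df := hf.differentiable two_ne_zero
  have dg := hg.differentiable two_ne_zero
  have first_deriv : fderiv ℝ (fun x => f x * g x) =
      fun x => f x • fderiv ℝ g x + g x • fderiv ℝ f x :=
    funext fun x => fderiv_fun_mul (df x) (dg x)
  rw [sliceLaplacian, first_deriv,
    (((df z).hasFDerivAt.fun_smul (hasFDerivAt_fderiv hg.contDiffAt)).fun_add
      ((dg z).hasFDerivAt.fun_smul (hasFDerivAt_fderiv hf.contDiffAt))).fderiv]
  simp only [sliceLaplacian, add_apply, smul_apply, ContinuousLinearMap.smulRight_apply,
    smul_eq_mul]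
  ring

include hf in
lemma sliceLaplacian_const_mul (c : ℝ) (z v : E) :
    sliceLaplacian (fun x => c * f x) z v = c * sliceLaplacian f z v := by
  rw [sliceLaplacian_mul contDiff_const hf, sliceLaplacian_const]
  simp

include hf hg in
lemma sliceLaplacian_sub (z v : E) :
    sliceLaplacian (fun x => f x - g x) z v = sliceLaplacian f z v - sliceLaplacian g z v := by
  have h := sliceLaplacian_add hf (contDiff_const.mul hg) z v (g := fun x => -1 * g x)
  rw [sliceLaplacian_const_mul hg] at h
  simpa only [neg_one_mul, ← sub_eq_add_neg] using h

include hf hg in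
lemma sliceLaplacian_mul_of_nonneg_of_eq_zero (hf0 : ∀ x, 0 ≤ f x) {z : E} (hfz : f z = 0)
    (v : E) : sliceLaplacian (fun x => f x * g x) z v = g z * sliceLaplacian f z v := by
  have hmin : IsLocalMin f z := Filter.Eventually.of_forall fun x => hfz.trans_le (hf0 x)
  rw [sliceLaplacian_mul hf hg, hmin.fderiv_eq_zero, hfz]
  simp

/-- The cross term makes the Laplacian of `(εf - g)² + (εf)²` negative at the zeros of `g`, for
`ε` small. -/
lemma sliceLaplacian_sq_sub_add_sq (hf : ContDiff ℝ 2 f) (hg : ContDiff ℝ 2 g)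
    (hg0 : ∀ x, 0 ≤ g x) {z : E} (hgz : g z = 0) (ε : ℝ) (v : E) :
    sliceLaplacian (fun x => (ε * f x - g x) ^ 2 + (ε * f x) ^ 2) z v =
      2 * ε * (ε * sliceLaplacian (fun x => f x * f x) z v - f z * sliceLaplacian g z v) := by
  have expand : (fun x => (ε * f x - g x) ^ 2 + (ε * f x) ^ 2) =
      fun x => 2 * ε ^ 2 * (f x * f x) + (-2 * ε * (g x * f x) + g x * g x) :=
    funext fun x => by ring
  rw [expand, sliceLaplacian_add (by fun_prop) (by fun_prop),
    sliceLaplacian_add (by fun_prop) (by fun_prop), sliceLaplacian_const_mul (by fun_prop),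
    sliceLaplacian_const_mul (by fun_prop), sliceLaplacian_mul_of_nonneg_of_eq_zero hg hf hg0 hgz,
    sliceLaplacian_mul_of_nonneg_of_eq_zero hg hg hg0 hgz, hgz]
  ring

include hf in
lemma sliceLaplacian_one_sub_inv_le (hpos : ∀ x, 0 < f x) (z v : E) :
    sliceLaplacian (fun x => 1 - (f x)⁻¹) z v ≤ sliceLaplacian f z v / f z ^ 2 := by
  have hinv : ContDiff ℝ 2 fun x => (f x)⁻¹ := hf.inv fun x => (hpos x).ne'
  have hmul := sliceLaplacian_mul hf hinv z v
  have hderiv (w : E) : fderiv ℝ (fun x => (f x)⁻¹) z w = -(f z ^ 2)⁻¹ * fderiv ℝ f z w := by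
    have h := (hasDerivAt_inv (hpos z).ne').comp_hasFDerivAt z
      (hf.differentiable two_ne_zero z).hasFDerivAt
    exact congrArg (fun L => L w) h.fderiv
  have hconst : (fun x => f x * (f x)⁻¹) = fun _ => 1 :=
    funext fun x => mul_inv_cancel₀ (hpos x).ne'
  have hfz := hpos z
  rw [hconst, sliceLaplacian_const, hderiv, hderiv] at hmul
  rw [sliceLaplacian_sub contDiff_const hinv, sliceLaplacian_const, zero_sub]
  have hgrad : sliceLaplacian f z v / f z ^ 2 - -sliceLaplacian (fun x => (f x)⁻¹) z v =
      2 * (fderiv ℝ f z v ^ 2 + fderiv ℝ f z (I • v) ^ 2) / f z ^ 3 := by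
    field_simp at hmul ⊢
    linear_combination -hmul
  exact sub_nonneg.1 (hgrad ▸ by positivity)

include hf in
lemma norm_sq_mul_sliceLaplacian_smul [IsScalarTower ℝ ℂ E] {c : ℂ} {a : ℝ}
    (h : ∀ x, f (c • x) = a * f x) (z v : E) :
    ‖c‖ ^ 2 * sliceLaplacian f (c • z) v = a * sliceLaplacian f z v := by
  have hcomp := sliceLaplacian_comp (φ := fun x : E => c • x) (z := z) hf.contDiffAt
    (by fun_prop) v
  have hderiv : fderiv ℂ (fun x : E => c • x) z v = c • v := by
    rw [fderiv_fun_const_smul differentiableAt_fun_id, fderiv_fun_id, smul_apply]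
    rfl
  rw [hderiv, sliceLaplacian_smul] at hcomp
  rw [← hcomp, ← sliceLaplacian_const_mul hf]
  exact congrArg (sliceLaplacian · z v) (funext h)

lemma sliceLaplacian_re [IsScalarTower ℝ ℂ E] {φ : E → ℂ} {z : E} (hφ : ContDiffAt ℂ 2 φ z)
    (v : E) : sliceLaplacian (fun x => (φ x).re) z v = 0 := by
  have hre : fderiv ℝ re = fun _ => reCLM := funext fun x => reCLM.hasFDerivAt.fderiv
  refine (sliceLaplacian_comp (f := re) reCLM.contDiff.contDiffAt hφ v).trans ?_
  simp [sliceLaplacian, hre]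

end SliceLaplacianRules

section SquareForm

lemma sliceLaplacian_normSq (w : ℂ) : sliceLaplacian (fun x => normSq x) w 1 = 4 := by
  have hnormSq : HasMixedExpansion (fun w => normSq w) 2 fun _ => 1 := fun ξ => by
    rw [show Finset.Ioo 0 2 = {1} from rfl, Finset.sum_singleton]
    simp [mul_conj]
  refine ofReal_injective ?_
  rw [hnormSq.sliceLaplacian_one, show Finset.Ioo 0 2 = {1} from rfl, Finset.sum_singleton]
  simp

/-- The real quadratic form `|w|² - Re (w² s̄)`. For `‖s‖ = 1` it is the squared distance of `w` to
the real line spanned by the square roots of `s`, up to a factor; indexing by `s` makes the forms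
of `ζ` and `-ζ` coincide. -/
def squareForm (s w : ℂ) : ℝ := normSq w - (w ^ 2 * conj s).re

lemma contDiff_normSq {n : WithTop ℕ∞} : ContDiff ℝ n fun w : ℂ => normSq w := by
  simpa only [normSq_eq_norm_sq] using contDiff_norm_sq (n := n) ℝ

lemma contDiff_re_sq_mul (c : ℂ) {n : WithTop ℕ∞} : ContDiff ℝ n fun w : ℂ => (w ^ 2 * c).re :=
  reCLM.contDiff.comp ((contDiff_id.pow 2).mul contDiff_const)

lemma contDiff_squareForm (s : ℂ) {n : WithTop ℕ∞} : ContDiff ℝ n (squareForm s) :=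
  contDiff_normSq.sub (contDiff_re_sq_mul _)

lemma sliceLaplacian_squareForm (s w : ℂ) : sliceLaplacian (squareForm s) w 1 = 4 := by
  refine (sliceLaplacian_sub contDiff_normSq (contDiff_re_sq_mul _) w 1).trans ?_
  rw [sliceLaplacian_normSq, sliceLaplacian_re (by fun_prop), sub_zero]

lemma squareForm_nonneg {s : ℂ} (hs : ‖s‖ = 1) (w : ℂ) : 0 ≤ squareForm s w := by
  have h := re_le_norm (w ^ 2 * conj s)
  rwa [norm_mul, norm_pow, RCLike.norm_conj, hs, mul_one, ← normSq_eq_norm_sq, ← sub_nonneg] at h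

lemma squareForm_eq_zero_iff {s w : ℂ} (hs : ‖s‖ = 1) (hw : ‖w‖ = 1) :
    squareForm s w = 0 ↔ w ^ 2 = s := by
  have h : normSq (w ^ 2 - s) = 2 * squareForm s w := by
    rw [normSq_sub, squareForm]
    simp only [normSq_eq_norm_sq, norm_pow, hs, hw]
    ring
  rw [← sub_eq_zero (a := w ^ 2), ← normSq_eq_zero, h]
  simp

lemma squareForm_ofReal_mul (s : ℂ) (t : ℝ) (w : ℂ) :
    squareForm s (t * w) = t ^ 2 * squareForm s w := by
  rw [squareForm, mul_pow, mul_assoc, ← ofReal_pow, re_ofReal_mul, map_mul, normSq_ofReal,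
    squareForm]
  ring

/-- A nonnegative real form of degree `2 * (m + #S)` vanishing at the square roots of the elements
of `S`. -/
def squareFormProd (m : ℕ) (S : Finset ℂ) (w : ℂ) : ℝ := normSq w ^ m * ∏ s ∈ S, squareForm s w

lemma contDiff_squareFormProd (m : ℕ) (S : Finset ℂ) {n : WithTop ℕ∞} :
    ContDiff ℝ n (squareFormProd m S) :=
  (contDiff_normSq.pow m).mul (contDiff_prod fun s _ => contDiff_squareForm s)

lemma squareFormProd_ofReal_mul (m : ℕ) (S : Finset ℂ) (t : ℝ) (w : ℂ) :
    squareFormProd m S (t * w) = t ^ (2 * (m + S.card)) * squareFormProd m S w := by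
  simp only [squareFormProd, squareForm_ofReal_mul, Finset.prod_mul_distrib, Finset.prod_const,
    map_mul, normSq_ofReal]
  ring

lemma squareFormProd_eq_mul_erase (m : ℕ) {S : Finset ℂ} {s : ℂ} (hs : s ∈ S) :
    squareFormProd m S = fun w => squareForm s w * squareFormProd m (S.erase s) w :=
  funext fun w => by rw [squareFormProd, squareFormProd, ← Finset.mul_prod_erase S _ hs]; ring

section

variable {S : Finset ℂ} (hS : ∀ s ∈ S, ‖s‖ = 1) (m : ℕ)
include hS

lemma squareFormProd_nonneg (w : ℂ) : 0 ≤ squareFormProd m S w :=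
  mul_nonneg (pow_nonneg (normSq_nonneg w) m)
    (Finset.prod_nonneg fun s hs => squareForm_nonneg (hS s hs) w)

lemma squareFormProd_eq_zero {ζ : ℂ} (hζ : ‖ζ‖ = 1) (hζS : ζ ^ 2 ∈ S) :
    squareFormProd m S ζ = 0 :=
  mul_eq_zero_of_right _
    (Finset.prod_eq_zero hζS ((squareForm_eq_zero_iff (hS _ hζS) hζ).2 rfl))

lemma sliceLaplacian_squareFormProd_pos {ζ : ℂ} (hζ : ‖ζ‖ = 1) (hζS : ζ ^ 2 ∈ S) :
    0 < sliceLaplacian (squareFormProd m S) ζ 1 := by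
  rw [squareFormProd_eq_mul_erase m hζS, sliceLaplacian_mul_of_nonneg_of_eq_zero
    (contDiff_squareForm _) (contDiff_squareFormProd _ _) (squareForm_nonneg (hS _ hζS))
    ((squareForm_eq_zero_iff (hS _ hζS) hζ).2 rfl), sliceLaplacian_squareForm]
  have hprod : 0 < ∏ s ∈ S.erase (ζ ^ 2), squareForm s ζ := Finset.prod_pos fun s hs =>
    (squareForm_nonneg (hS s (Finset.mem_of_mem_erase hs)) ζ).lt_of_ne' fun h =>
      Finset.ne_of_mem_erase hs
        ((squareForm_eq_zero_iff (hS s (Finset.mem_of_mem_erase hs)) hζ).1 h).symm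
  rw [squareFormProd, normSq_eq_norm_sq, hζ]
  simpa using hprod

end

end SquareForm

section Bump

/-- Only the part of `K` where `a ≥ 0` matters, and there `q` is bounded below. -/
lemma exists_forall_le_mul_of_isCompact {α : Type*} [TopologicalSpace α] {K : Set α}
    (hK : IsCompact K) {a q : α → ℝ} (ha : Continuous a) (hq : Continuous q) (hq0 : ∀ x, 0 ≤ q x)
    (h : ∀ x ∈ K, q x = 0 → a x < 0) : ∃ C > 0, ∀ x ∈ K, a x ≤ C * q x := by
  have hpos : ∀ x ∈ K ∩ {x | 0 ≤ a x}, 0 < q x := fun x hx =>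
    (hq0 x).lt_of_ne' fun hqx => (h x hx.1 hqx).not_ge hx.2
  obtain ⟨M, hM⟩ := (hK.inter_right (isClosed_le continuous_const ha)).bddAbove_image
    (ha.continuousOn.div hq.continuousOn fun x hx => (hpos x hx).ne')
  refine ⟨max M 1, by positivity, fun x hx => ?_⟩
  rcases le_total 0 (a x) with hax | hax
  · calc a x = a x / q x * q x := (div_mul_cancel₀ _ (hpos x ⟨hx, hax⟩).ne').symm
      _ ≤ max M 1 * q x := by
        gcongr
        · exact hq0 x
        · exact (hM (mem_image_of_mem _ ⟨hx, hax⟩)).trans (le_max_left M 1)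
  · exact hax.trans (mul_nonneg (by positivity) (hq0 x))

lemma exists_pos_forall_mul_lt_of_finite {α : Type*} {Z : Set α} (hZ : Z.Finite) {a b : α → ℝ}
    (hb : ∀ x ∈ Z, 0 < b x) : ∃ ε > 0, ∀ x ∈ Z, ε * a x < b x := by
  have h : ∀ᶠ ε in nhdsWithin (0 : ℝ) (Ioi 0), ∀ x ∈ Z, ε * a x < b x := by
    refine (Filter.eventually_all_finite hZ).2 fun x hx => nhdsWithin_le_nhds ?_
    refine ContinuousAt.eventually_lt (by fun_prop) continuousAt_const ?_
    simpa using hb x hx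
  exact (h.and self_mem_nhdsWithin).exists.imp fun ε hε => hε.symm

/-- The witness is `(εn - g)² + (εn)²` where `n` is a power of `|w|²` and `g` a form of the same
degree vanishing on `Z` with positive Laplacian there. -/
lemma exists_form_sliceLaplacian_neg (j : ℕ) {Z : Set ℂ} (hZ : Z.Finite)
    (hZ1 : ∀ ζ ∈ Z, ‖ζ‖ = 1) :
    ∃ (N : ℕ) (h : ℂ → ℝ) (ε : ℝ), j ≤ N ∧ 0 < ε ∧ ContDiff ℝ ⊤ h ∧
      (∀ (t : ℝ) (w : ℂ), h (t * w) = t ^ N * h w) ∧ (∀ w, ε * ‖w‖ ^ N ≤ h w) ∧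
      ∀ ζ ∈ Z, sliceLaplacian h ζ 1 < 0 := by
  classical
  let S := hZ.toFinset.image (· ^ 2)
  have hS : ∀ s ∈ S, ‖s‖ = 1 := by
    simp only [S, Finset.forall_mem_image, Finite.mem_toFinset]
    intro ζ hζ
    rw [norm_pow, hZ1 ζ hζ, one_pow]
  have hmem : ∀ ζ ∈ Z, ζ ^ 2 ∈ S := fun ζ hζ => Finset.mem_image_of_mem _ (hZ.mem_toFinset.2 hζ)
  let n : ℂ → ℝ := fun w => normSq w ^ (j + S.card)
  let g := squareFormProd j S
  have hn {k : WithTop ℕ∞} : ContDiff ℝ k n := contDiff_normSq.pow _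
  have hg {k : WithTop ℕ∞} : ContDiff ℝ k g := contDiff_squareFormProd j S
  obtain ⟨ε, hε, hεZ⟩ := exists_pos_forall_mul_lt_of_finite hZ
    (a := fun ζ => sliceLaplacian (fun w => n w * n w) ζ 1) (b := fun ζ => sliceLaplacian g ζ 1)
    fun ζ hζ => sliceLaplacian_squareFormProd_pos hS j (hZ1 ζ hζ) (hmem ζ hζ)
  refine ⟨4 * (j + S.card), fun w => (ε * n w - g w) ^ 2 + (ε * n w) ^ 2, ε ^ 2, by lia,
    by positivity, by fun_prop, fun t w => ?_, fun w => ?_, fun ζ hζ => ?_⟩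
  · simp only [n, g, squareFormProd_ofReal_mul, map_mul, normSq_ofReal]
    ring
  · have hnorm : ε ^ 2 * ‖w‖ ^ (4 * (j + S.card)) = (ε * n w) ^ 2 := by
      simp only [n, normSq_eq_norm_sq]
      ring
    exact hnorm.trans_le (le_add_of_nonneg_left (sq_nonneg _))
  · have hnζ : n ζ = 1 := by simp [n, normSq_eq_norm_sq, hZ1 ζ hζ]
    rw [sliceLaplacian_sq_sub_add_sq hn hg (squareFormProd_nonneg hS j)
      (squareFormProd_eq_zero hS j (hZ1 ζ hζ) (hmem ζ hζ)), hnζ, one_mul]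
    exact mul_neg_of_pos_of_neg (by positivity) (sub_neg.2 (hεZ ζ hζ))

lemma sliceLaplacian_le_of_homogeneous {u h : ℂ → ℝ} (hu : ContDiff ℝ 2 u) (hh : ContDiff ℝ 2 h)
    {j N : ℕ} (hjN : j ≤ N) (hu' : ∀ (t : ℝ) (w : ℂ), u (t * w) = t ^ j * u w)
    (hh' : ∀ (t : ℝ) (w : ℂ), h (t * w) = t ^ N * h w) {C : ℝ}
    (hC : ∀ ξ ∈ sphere (0 : ℂ) 1, sliceLaplacian h ξ 1 ≤ C * sliceLaplacian u ξ 1) {w : ℂ}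
    (hw : w ≠ 0) : sliceLaplacian h w 1 ≤ C * ‖w‖ ^ (N - j) * sliceLaplacian u w 1 := by
  have hw0 : 0 < ‖w‖ := norm_pos_iff.2 hw
  obtain ⟨ξ, hξ, hwξ⟩ : ∃ ξ ∈ sphere (0 : ℂ) 1, (‖w‖ : ℂ) • ξ = w :=
    ⟨w / ‖w‖, by simp [hw], mul_div_cancel₀ w (ofReal_ne_zero.2 hw0.ne')⟩
  have hlap_h := norm_sq_mul_sliceLaplacian_smul hh (hh' ‖w‖) ξ 1
  have hlap_u := norm_sq_mul_sliceLaplacian_smul hu (hu' ‖w‖) ξ 1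
  rw [hwξ, norm_real, norm_norm] at hlap_h hlap_u
  refine le_of_mul_le_mul_left ?_ (pow_pos hw0 2)
  calc ‖w‖ ^ 2 * sliceLaplacian h w 1 = ‖w‖ ^ N * sliceLaplacian h ξ 1 := hlap_h
    _ ≤ ‖w‖ ^ N * (C * sliceLaplacian u ξ 1) := by gcongr; exact hC ξ hξ
    _ = C * ‖w‖ ^ (N - j) * (‖w‖ ^ j * sliceLaplacian u ξ 1) := by
      rw [← Nat.sub_add_cancel hjN, pow_add, Nat.add_sub_cancel]; ring
    _ = ‖w‖ ^ 2 * (C * ‖w‖ ^ (N - j) * sliceLaplacian u w 1) := by rw [← hlap_u]; ring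

lemma pow_le_of_mul_pow_le {t ε a : ℝ} (ht : 0 ≤ t) (hε : 0 < ε) (ha : 0 ≤ a) {m N : ℕ}
    (hmN : m ≤ N) (h : ε * t ^ N ≤ a) : t ^ m ≤ (1 + 1 / ε) * (1 + a) ^ 2 :=
  calc t ^ m ≤ 1 + t ^ N := by
        rcases le_total t 1 with ht1 | ht1
        · exact (pow_le_one₀ ht ht1).trans (le_add_of_nonneg_right (by positivity))
        · exact (pow_le_pow_right₀ ht1 hmN).trans (le_add_of_nonneg_left zero_le_one)
    _ ≤ 1 + 1 / ε * a := by
        rw [one_div_mul_eq_div]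
        gcongr
        exact (le_div_iff₀' hε).2 h
    _ ≤ (1 + 1 / ε) * (1 + a) := by
        have : 0 ≤ 1 / ε := by positivity
        linarith
    _ ≤ (1 + 1 / ε) * (1 + a) ^ 2 := by
        gcongr
        exact le_self_pow₀ (le_add_of_nonneg_right ha) two_ne_zero

/-- The truncation `1 - (1 + h)⁻¹ = h / (1 + h)` compensates the growth of `h` at infinity. -/
lemma sliceLaplacian_one_sub_inv_one_add_le {u h : ℂ → ℝ} (hu : ContDiff ℝ 2 u)
    (hh : ContDiff ℝ 2 h) (hsub : Subharmonic u) {ε C : ℝ} (hε : 0 < ε) (hC : 0 ≤ C) {m N : ℕ}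
    (hmN : m ≤ N) (hlow : ∀ w, ε * ‖w‖ ^ N ≤ h w)
    (hdom : ∀ w ≠ 0, sliceLaplacian h w 1 ≤ C * ‖w‖ ^ m * sliceLaplacian u w 1) (w : ℂ) :
    sliceLaplacian (fun w => 1 - (1 + h w)⁻¹) w 1 ≤ C * (1 + 1 / ε) * sliceLaplacian u w 1 := by
  have hnonneg (w : ℂ) : 0 ≤ h w := le_trans (by positivity) (hlow w)
  have hpos (w : ℂ) : 0 < 1 + h w := add_pos_of_pos_of_nonneg one_pos (hnonneg w)
  have hone_add : ContDiff ℝ 2 fun w => 1 + h w := contDiff_const.add hh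
  have hk : ContDiff ℝ 2 fun w => 1 - (1 + h w)⁻¹ :=
    contDiff_const.sub (hone_add.inv fun w => (hpos w).ne')
  refine sub_nonneg.1 (nonneg_of_forall_ne (a := 0) ((continuous_const.mul
    (continuous_sliceLaplacian hu 1)).sub (continuous_sliceLaplacian hk 1)).continuousAt
    (fun w hw => sub_nonneg.2 ?_) w)
  refine (sliceLaplacian_one_sub_inv_le hone_add hpos w 1).trans ?_
  rw [sliceLaplacian_add contDiff_const hh, sliceLaplacian_const, zero_add,
    div_le_iff₀ (pow_pos (hpos w) 2)]
  calc sliceLaplacian h w 1 ≤ C * ‖w‖ ^ m * sliceLaplacian u w 1 := hdom w hw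
    _ ≤ C * ((1 + 1 / ε) * (1 + h w) ^ 2) * sliceLaplacian u w 1 := by
      gcongr
      · exact (subharmonic_iff hu).1 hsub w
      · exact pow_le_of_mul_pow_le (norm_nonneg w) hε (hnonneg w) hmN (hlow w)
    _ = C * (1 + 1 / ε) * sliceLaplacian u w 1 * (1 + h w) ^ 2 := by ring

section

variable {u : ℂ → ℝ} {j : ℕ} (hu : ContDiff ℝ 2 u) (hsub : Subharmonic u) (hj : j ≠ 0)
  (hhom : ∀ (t : ℝ) (w : ℂ), u (t * w) = t ^ j * u w)
  (hfin : {ξ : ℂ | ‖ξ‖ = 1 ∧ sliceLaplacian u ξ 1 = 0}.Finite)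
include hu hsub hj hhom hfin

lemma exists_form_sliceLaplacian_le :
    ∃ (N : ℕ) (h : ℂ → ℝ) (ε C : ℝ), 0 < ε ∧ 0 < C ∧ ContDiff ℝ ⊤ h ∧ h 0 = 0 ∧
      (∀ w, ε * ‖w‖ ^ N ≤ h w) ∧
      ∀ w ≠ 0, sliceLaplacian h w 1 ≤ C * ‖w‖ ^ (N - j) * sliceLaplacian u w 1 := by
  obtain ⟨N, h, ε, hjN, hε, hh, hhom', hlow, hneg⟩ :=
    exists_form_sliceLaplacian_neg j hfin fun ζ hζ => hζ.1
  have hh2 : ContDiff ℝ 2 h := hh.of_le le_top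
  obtain ⟨C, hC, hCb⟩ := exists_forall_le_mul_of_isCompact (isCompact_sphere (0 : ℂ) 1)
    (continuous_sliceLaplacian hh2 1) (continuous_sliceLaplacian hu 1)
    ((subharmonic_iff hu).1 hsub)
    fun ξ hξ hξ0 => hneg ξ ⟨mem_sphere_zero_iff_norm.1 hξ, hξ0⟩
  refine ⟨N, h, ε, C, hε, hC, hh, ?_, hlow, fun w hw =>
    sliceLaplacian_le_of_homogeneous hu hh2 hjN hhom hhom' hCb hw⟩
  simpa [show N ≠ 0 by lia] using hhom' 0 0

lemma exists_contDiff_sliceLaplacian_le :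
    ∃ κ : ℂ → ℝ, ContDiff ℝ ⊤ κ ∧ (∀ w, 0 ≤ κ w) ∧ (∀ w, κ w = 0 ↔ w = 0) ∧
      ∀ w, sliceLaplacian κ w 1 ≤ sliceLaplacian u w 1 := by
  obtain ⟨N, h, ε, C, hε, hC, hh, hh0, hlow, hdom⟩ :=
    exists_form_sliceLaplacian_le hu hsub hj hhom hfin
  have hpos (w : ℂ) (hw : w ≠ 0) : 0 < h w :=
    lt_of_lt_of_le (mul_pos hε (pow_pos (norm_pos_iff.2 hw) N)) (hlow w)
  have hone_le (w : ℂ) : 1 ≤ 1 + h w :=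
    le_add_of_nonneg_right (le_trans (by positivity) (hlow w))
  let k : ℂ → ℝ := fun w => 1 - (1 + h w)⁻¹
  have hk : ContDiff ℝ ⊤ k :=
    contDiff_const.sub ((contDiff_const.add hh).inv fun w => (one_pos.trans_le (hone_le w)).ne')
  have hk_zero (w : ℂ) : k w = 0 ↔ w = 0 := by
    rw [sub_eq_zero, eq_comm, inv_eq_one, add_eq_left]
    exact ⟨fun h0 => by_contra fun hw => (hpos w hw).ne' h0, fun hw => hw ▸ hh0⟩
  have hM : 0 < C * (1 + 1 / ε) := by positivity
  refine ⟨fun w => (C * (1 + 1 / ε))⁻¹ * k w, contDiff_const.mul hk, fun w => ?_, fun w => ?_,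
    fun w => ?_⟩
  · exact mul_nonneg (by positivity) (sub_nonneg.2 (inv_le_one_of_one_le₀ (hone_le w)))
  · rw [mul_eq_zero, or_iff_right (inv_pos.2 hM).ne', hk_zero]
  · rw [sliceLaplacian_const_mul (hk.of_le le_top), inv_mul_le_iff₀ hM]
    exact sliceLaplacian_one_sub_inv_one_add_le hu (hh.of_le le_top) hsub hε hC.le (N.sub_le j)
      hlow hdom w

end

lemma subharmonic_sub_const_mul {u κ : ℂ → ℝ} (hu : ContDiff ℝ 2 u) (hκ : ContDiff ℝ 2 κ)
    (hsub : Subharmonic u) (hle : ∀ w, sliceLaplacian κ w 1 ≤ sliceLaplacian u w 1) {δ : ℝ}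
    (hδ : 0 ≤ δ) (hδ1 : δ ≤ 1) : Subharmonic fun w => u w - δ * κ w := by
  have hδκ : ContDiff ℝ 2 fun w => δ * κ w := contDiff_const.mul hκ
  rw [subharmonic_iff hu] at hsub
  refine (subharmonic_iff (hu.sub hδκ)).2 fun w => ?_
  rw [sliceLaplacian_sub hu hδκ, sliceLaplacian_const_mul hκ]
  nlinarith [hle w, hsub w]

end Bump

lemma IsPluriharmonic.zero : IsPluriharmonic 0 :=
  ⟨0, differentiable_const 0, fun _ => by simp⟩

lemma HasMixedExpansion.degree_ne_zero {U : ℂ → ℝ} {j : ℕ} {r : ℕ → ℂ}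
    (hU : HasMixedExpansion U j r) (hU0 : U ≠ 0) : j ≠ 0 := by
  rintro rfl
  exact hU0 (funext fun ξ => ofReal_injective (by simp [hU ξ]))

lemma exists_eq_comp_of_propertyB {P : ℂ × ℂ → ℝ} {D : ℕ} (hpsh : IsPsh P) (hP : P ≠ 0)
    (hnt : NoPluriharmonicTerms P) (hhom : HomogeneousDeg P D) (hB : PropertyB P) :
    ∃ X d F U j r, IsPrimitiveFirstIntegral X d F ∧ HasMixedExpansion U j r ∧ P = U ∘ F := by
  obtain ⟨T, hT⟩ := exists_isBihomogeneousExpansion hnt hhom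
  have hP2 : ContDiff ℝ 2 P := hT.isPolarization.contDiff_real
  obtain ⟨X, hX⟩ := exists_isNullField_of_propertyB hP2 hB
  have hint := fun b hb w => hT.isFirstIntegral ((isPsh_iff hP2).1 hpsh) hX (b := b) hb w
  obtain ⟨z, hz⟩ := Function.ne_iff.1 hP
  obtain ⟨b, hb, hTz⟩ := hT.exists_apply_ne_zero hz
  obtain ⟨d, F, hF⟩ := exists_isPrimitiveFirstIntegral hX.differentiable hX.ne_zero
    (hint b hb (star z)) (Nat.sub_ne_zero_of_lt (Finset.mem_Ioo.1 hb).2)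
    (Function.ne_iff.2 ⟨z, hTz⟩)
  obtain ⟨U, j, r, hU, hPU⟩ := hT.exists_eq_comp hint hF hP
  exact ⟨X, d, F, U, j, r, hF, hU, hPU⟩

/-- Theorem 2.3: a homogeneous plurisubharmonic polynomial with
Property (B) factors as `U ∘ F` with `U` subharmonic and `F` holomorphic
homogeneous, and can be bumped off `F⁻¹{0}`. -/
theorem homobumpB (k : ℕ) (hk : 1 ≤ k) (P : ℂ × ℂ → ℝ)
    (hpoly : IsRealPoly2 P) (hpsh : IsPsh P) (hnph : ¬ IsPluriharmonic P)
    (hnt : NoPluriharmonicTerms P) (hhom : HomogeneousDeg P (2 * k))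
    (hB : PropertyB P) :
    ∃ (U : ℂ → ℝ) (F : ℂ × ℂ → ℂ) (j d : ℕ),
      IsRealPoly1 U ∧ Subharmonic U ∧
      (∀ t : ℝ, 0 < t → ∀ w : ℂ, U ((t : ℂ) * w) = t ^ j * U w) ∧
      IsPolyMap2 F ∧ (∀ t : ℝ, 0 < t → ∀ z : ℂ × ℂ, F (t • z) = (t : ℂ) ^ d * F z) ∧
      (∀ z, P z = U (F z)) ∧
      ∃ H : ℂ × ℂ → ℝ, ContDiff ℝ (⊤ : ℕ∞) H ∧ (∀ z, 0 ≤ H z) ∧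
        (∀ z : ℂ × ℂ, H z = 0 ↔ F z = 0) ∧
        ∀ δ : ℝ, 0 < δ → δ ≤ 1 → IsPsh fun z => P z - δ * H z := by
  have hP : P ≠ 0 := fun h => hnph (h ▸ IsPluriharmonic.zero)
  obtain ⟨X, d, F, U, j, r, hF, hU, rfl⟩ := exists_eq_comp_of_propertyB hpsh hP hnt hhom hB
  have hU0 : U ≠ 0 := fun h => hP (by rw [h, Pi.zero_comp])
  have hU2 : ContDiff ℝ 2 U := hU.isPolarization.contDiff_real
  have hFn {n : WithTop ℕ∞} : ContDiff ℂ n F := hF.isPolyMap.contDiff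
  have hsub : Subharmonic U := hF.subharmonic_of_isPsh_comp hU2 hpsh
  obtain ⟨κ, hκ, hκ_nonneg, hκ_zero, hκ_le⟩ := exists_contDiff_sliceLaplacian_le hU2 hsub
    (hU.degree_ne_zero hU0) hU.map_ofReal_mul (hU.finite_setOf_sliceLaplacian_eq_zero hU0)
  have hκ2 : ContDiff ℝ 2 κ := hκ.of_le le_top
  have hF_smul (t : ℝ) (z : ℂ × ℂ) : F (t • z) = (t : ℂ) ^ d * F z := by
    rw [← hF.map_smul, show (t : ℂ) • z = t • z by ext <;> simp]
  refine ⟨U, F, j, d, hU.isRealPoly1, hsub, fun t _ => hU.map_ofReal_mul t, hF.isPolyMap,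
    fun t _ => hF_smul t, fun _ => rfl, κ ∘ F, (hκ.of_le le_top).comp (hFn.restrict_scalars ℝ),
    fun z => hκ_nonneg (F z), fun z => hκ_zero (F z), fun δ hδ hδ1 => ?_⟩
  exact isPsh_comp (U := fun w => U w - δ * κ w) (hU2.sub (contDiff_const.mul hκ2)) hFn
    (subharmonic_sub_const_mul hU2 hκ2 hsub hκ_le hδ.le hδ1)

end
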